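/- arXiv:1802.07110 — 2 statements merged into one kernel-verified Lean document; each statement's English description precedes it below -/
import Mathlib

section
/- Let p = 2 and let f(s) = s^{q-1} - s^{r-1} with 2 ≤ r < q, where additionally q < 2N/(N-2) in the case R1 = 0 with N ≥ 3. Suppose that for some integer k ≥ 1 there exist λ ∈ [0,∞) with q - r > λ and a not-identically-zero C¹ function w : [R1,R2] → ℝ with w'(R1) = w'(R2) = 0, such that r ↦ r^{N-1} w'(r) is continuous on [R1,R2], differentiable on (R1,R2], with derivative -λ r^{N-1} w(r) there, and such that w has exactly k zeros in (R1,R2). Then the Neumann problem on [R1,R2] admits at least k non-constant radial solutions with u(R1) > 1 and at least k non-constant radial solutions with u(R1) < 1. -/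
open Real Set Filter Topology

noncomputable def phip (p s : ℝ) : ℝ := |s| ^ (p - 2) * s

def Freg (f : ℝ → ℝ) : Prop :=
  ContinuousOn f (Ici 0) ∧ ContDiffOn ℝ 1 f (Ioi 0)

def Feq (f : ℝ → ℝ) : Prop :=
  f 0 = 0 ∧ f 1 = 0 ∧ (∀ s : ℝ, 0 < s → s < 1 → f s < 0) ∧ (∀ s : ℝ, 1 < s → 0 < f s)

def Fzero (p : ℝ) (f : ℝ → ℝ) : Prop :=
  ∃ c : ℝ, ∀ᶠ s in 𝓝[>] (0:ℝ), c ≤ f s / s ^ (p - 1)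

noncomputable def pstar (p : ℝ) (N : ℕ) : EReal :=
  if p < (N:ℝ) then (((N:ℝ) * p / ((N:ℝ) - p) : ℝ) : EReal) else ⊤

noncomputable def fstar (f : ℝ → ℝ) (s : ℝ) : ℝ := sSup (f '' Icc 1 s)

noncomputable def Fint (f : ℝ → ℝ) (s : ℝ) : ℝ := ∫ σ in (1:ℝ)..s, f σ

def Fsubl (p : ℝ) (f : ℝ → ℝ) : Prop :=
  ∃ M : ℝ, 0 < M ∧ ∀ ε > 0, ∀ᶠ s in atTop, f s / s ^ (p - 1) ≤ M + ε

def FsubcWith (p : ℝ) (N : ℕ) (f : ℝ → ℝ) (η : ℝ) : Prop :=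
  (∀ c : ℝ, ∃ᶠ s in atTop, c < f s / s ^ (p - 1)) ∧
  0 < η ∧ η < 1 ∧
  ∃ L : ℝ, (L : EReal) < pstar p N ∧
    ∀ᶠ s in atTop, fstar f s * s / Fint f (η * s) ≤ L

def Fsubc (p : ℝ) (N : ℕ) (f : ℝ → ℝ) : Prop := ∃ η : ℝ, FsubcWith p N f η

/-- A radial solution of the Neumann problem on `[R1,R2]`. -/
def NeumannSol (p : ℝ) (N : ℕ) (R1 R2 : ℝ) (f u : ℝ → ℝ) : Prop :=
  (∀ x ∈ Icc R1 R2, DifferentiableAt ℝ u x) ∧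
  ContinuousOn (deriv u) (Icc R1 R2) ∧
  (∀ x ∈ Icc R1 R2, 0 < u x) ∧
  deriv u R1 = 0 ∧ deriv u R2 = 0 ∧
  ContinuousOn (fun x => x ^ (N - 1) * phip p (deriv u x)) (Icc R1 R2) ∧
  ∀ x ∈ Ioc R1 R2,
    HasDerivAt (fun t => t ^ (N - 1) * phip p (deriv u t)) (-(x ^ (N - 1)) * f (u x)) x

noncomputable def fhat (f : ℝ → ℝ) (s : ℝ) : ℝ := if 0 ≤ s then f s else 0

noncomputable def Fhat (f : ℝ → ℝ) (s : ℝ) : ℝ := ∫ σ in (1:ℝ)..s, fhat f σ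

/-- A solution of the Cauchy problem with datum `d`, for the nonlinearity `g`. -/
def CauchySol (p : ℝ) (N : ℕ) (R1 R2 : ℝ) (g u : ℝ → ℝ) (d : ℝ) : Prop :=
  (∀ x ∈ Icc R1 R2, DifferentiableAt ℝ u x) ∧
  ContinuousOn (deriv u) (Icc R1 R2) ∧
  u R1 = d ∧ deriv u R1 = 0 ∧
  ContinuousOn (fun x => x ^ (N - 1) * phip p (deriv u x)) (Icc R1 R2) ∧
  ∀ x ∈ Ioc R1 R2,
    HasDerivAt (fun t => t ^ (N - 1) * phip p (deriv u t)) (-(x ^ (N - 1)) * g (u x)) x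

noncomputable def rOne (R1 R2 : ℝ) (u : ℝ → ℝ) : ℝ :=
  sSup {x | x ∈ Icc R1 R2 ∧ ∀ s ∈ Ico R1 x, 0 < u s}

noncomputable def rZero (R2 η d : ℝ) (u : ℝ → ℝ) : ℝ :=
  sSup {x | x ∈ Icc 0 R2 ∧ ∀ s ∈ Ico 0 x, η * d < u s}

noncomputable def energy (p : ℝ) (f u : ℝ → ℝ) (x : ℝ) : ℝ :=
  |deriv u x| ^ p / (p / (p - 1)) + Fhat f (u x)

def NonConstOn (R1 R2 : ℝ) (u : ℝ → ℝ) : Prop :=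
  ∃ x ∈ Icc R1 R2, ∃ x' ∈ Icc R1 R2, u x ≠ u x'

def DistinctOn (R1 R2 : ℝ) (u v : ℝ → ℝ) : Prop :=
  ∃ x ∈ Icc R1 R2, u x ≠ v x

noncomputable def nOverPstar (p : ℝ) (N : ℕ) : ℝ :=
  if p < (N:ℝ) then ((N:ℝ) - p) / p else 0

/-!
Linearise the equation at the constant solution `1`. In the phase plane `(u - 1, -t ^ (N - 1) u')`
the solution with datum `u(R1) = d ≠ 1` has a Prüfer angle that is continuous in `d`, and it solves
the Neumann problem exactly when its angle at `R2` is a multiple of `π`.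

* For `d` close to `1` we have `f(u) (u - 1) ≥ λ (u - 1)²` because `f'(1) = q - r > λ`. By Sturm
  comparison the angle at `R2` is at least that of the eigenfunction `w`, which is at least `k π`
  since `w` has `k` zeros and ends with zero slope.
* For `d` close to `0` the angle is less than `π` by continuity, since `0` is an equilibrium.
* For large `d` the angle is less than `π` as well. Otherwise `u` would have a critical point with
  value in `(0, 1)`, where its energy is bounded independently of `d`. On an annulus this is
  excluded because `t ^ (2 (N - 1))` times the energy is nondecreasing; on a ball, Pohozaev's
  identity excludes it in the subcritical range.

By the intermediate value theorem the angle takes each of the values `π, 2 π, …, k π` for some `d`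
in `(0, 1)` and for some `d > 1`.
-/

open scoped NNReal

section Calculus

theorem monotoneOn_Icc_of_hasDerivAt_nonneg {f f' : ℝ → ℝ} {a b : ℝ}
    (hf : ContinuousOn f (Icc a b)) (hd : ∀ t ∈ Ioo a b, HasDerivAt f (f' t) t)
    (h0 : ∀ t ∈ Ioo a b, 0 ≤ f' t) : MonotoneOn f (Icc a b) := by
  refine monotoneOn_of_hasDerivWithinAt_nonneg (f' := f') (convex_Icc a b) hf ?_ ?_ <;>
    rw [interior_Icc]
  exacts [fun t ht => (hd t ht).hasDerivWithinAt, h0]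

theorem eq_left_of_hasDerivAt_zero {E : Type*} [NormedAddCommGroup E] [NormedSpace ℝ E]
    [CompleteSpace E] {f : ℝ → E} {a b : ℝ} (hf : ContinuousOn f (Icc a b))
    (hd : ∀ t ∈ Ioo a b, HasDerivAt f 0 t) {t : ℝ} (ht : t ∈ Icc a b) : f t = f a := by
  have := intervalIntegral.integral_eq_sub_of_hasDerivAt_of_le ht.1
    (hf.mono (Icc_subset_Icc_right ht.2)) (fun s hs => hd s ⟨hs.1, hs.2.trans_le ht.2⟩)
    intervalIntegrable_const
  rwa [intervalIntegral.integral_zero, eq_comm, sub_eq_zero] at this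

theorem hasDerivAt_primitive {E : Type*} [NormedAddCommGroup E] [NormedSpace ℝ E]
    [CompleteSpace E] {f : ℝ → E} {a b : ℝ} (hf : ContinuousOn f (Icc a b)) {t : ℝ}
    (ht : t ∈ Ioo a b) : HasDerivAt (fun t => ∫ s in a..t, f s) (f t) t :=
  intervalIntegral.integral_hasDerivAt_right
    ((hf.mono (Icc_subset_Icc_right ht.2.le)).intervalIntegrable_of_Icc ht.1.le)
    ((hf.mono Ioo_subset_Icc_self).stronglyMeasurableAtFilter isOpen_Ioo t ht)
    (hf.continuousAt (Icc_mem_nhds ht.1 ht.2))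

theorem continuousOn_primitive {E : Type*} [NormedAddCommGroup E] [NormedSpace ℝ E]
    {f : ℝ → E} {a b : ℝ} (hab : a ≤ b) (hf : ContinuousOn f (Icc a b)) :
    ContinuousOn (fun t => ∫ s in a..t, f s) (Icc a b) := by
  rw [← uIcc_of_le hab] at hf ⊢
  exact intervalIntegral.continuousOn_primitive_interval hf.integrableOn_uIcc

theorem continuousOn_parametric_intervalIntegral {X : Type*} [TopologicalSpace X] {S : Set X}
    {a b : ℝ} (hab : a ≤ b) {F : X → ℝ → ℝ} (hF : ContinuousOn F.uncurry (S ×ˢ Icc a b)) :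
    ContinuousOn (fun x => ∫ t in a..b, F x t) S := by
  rw [continuousOn_iff_continuous_domRestrict]
  have hproj : Continuous fun z : S × ℝ => F z.1 (projIcc a b hab z.2) :=
    hF.comp_continuous (f := fun z : S × ℝ => ((z.1 : X), (projIcc a b hab z.2 : ℝ)))
      (by fun_prop) fun z => ⟨z.1.2, Subtype.coe_prop _⟩
  refine (intervalIntegral.continuous_parametric_intervalIntegral_of_continuous'
    (μ := MeasureTheory.volume) (f := fun (x : S) t => F x (projIcc a b hab t))
    hproj a b).congr fun x => ?_
  refine intervalIntegral.integral_congr fun t ht => ?_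
  rw [uIcc_of_le hab] at ht
  simp only [projIcc_of_mem hab ht]

theorem exp_integral_mul_le_of_mul_le_deriv {f f' m : ℝ → ℝ} {a b : ℝ} (hab : a ≤ b)
    (hf : ContinuousOn f (Icc a b)) (hm : ContinuousOn m (Icc a b))
    (hd : ∀ t ∈ Ioo a b, HasDerivAt f (f' t) t) (h : ∀ t ∈ Ioo a b, m t * f t ≤ f' t) :
    exp (∫ s in a..b, m s) * f a ≤ f b := by
  have key : MonotoneOn (fun t => exp (-∫ s in a..t, m s) * f t) (Icc a b) := by
    refine monotoneOn_Icc_of_hasDerivAt_nonneg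
      ((continuous_exp.comp_continuousOn (continuousOn_primitive hab hm).neg).mul hf)
      (fun t ht => (hasDerivAt_primitive hm ht).fun_neg.exp.fun_mul (hd t ht)) fun t ht => ?_
    have := mul_nonneg (exp_pos (-∫ s in a..t, m s)).le (sub_nonneg.2 (h t ht))
    linarith
  have hle := key (left_mem_Icc.2 hab) (right_mem_Icc.2 hab) hab
  simp only [intervalIntegral.integral_same, neg_zero, exp_zero, one_mul] at hle
  calc exp (∫ s in a..b, m s) * f a
      ≤ exp (∫ s in a..b, m s) * (exp (-∫ s in a..b, m s) * f b) := by gcongr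
    _ = f b := by rw [← mul_assoc, ← exp_add, add_neg_cancel, exp_zero, one_mul]

theorem norm_mul_eq_norm_mul_exp_integral_im {z z' : ℝ → ℂ} {a b : ℝ}
    (hz : ContinuousOn z (Icc a b)) (hz' : ContinuousOn z' (Icc a b))
    (hd : ∀ t ∈ Ioo a b, HasDerivAt z (z' t) t) (hne : ∀ t ∈ Icc a b, z t ≠ 0) {t : ℝ}
    (ht : t ∈ Icc a b) :
    ‖z a‖ * z t = ‖z t‖ * z a * Complex.exp ((∫ s in a..t, (z' s / z s).im : ℝ) * Complex.I) := by
  have hab := ht.1.trans ht.2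
  have hq : ContinuousOn (fun s => z' s / z s) (Icc a b) := hz'.div hz hne
  have hconst : z t * Complex.exp (-∫ s in a..t, z' s / z s) = z a := by
    have := eq_left_of_hasDerivAt_zero (hz.mul (Complex.continuous_exp.comp_continuousOn
      (continuousOn_primitive hab hq).neg)) (fun s hs => ?_) ht
    · simpa using this
    · refine ((hd s hs).fun_mul (hasDerivAt_primitive hq hs).fun_neg.cexp).congr_deriv ?_
      have := hne s (Ioo_subset_Icc_self hs)
      field_simp
      ring
  set J := ∫ s in a..t, z' s / z s
  have hJim : ∫ s in a..t, (z' s / z s).im = J.im :=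
    Complex.imCLM.intervalIntegral_comp_comm
      ((hq.mono (Icc_subset_Icc_right ht.2)).intervalIntegrable_of_Icc ht.1)
  have hzt : z t = z a * Complex.exp J := by
    rw [← hconst, mul_assoc, ← Complex.exp_add, neg_add_cancel, Complex.exp_zero, mul_one]
  have hexp : Complex.exp J = Real.exp J.re * Complex.exp (J.im * Complex.I) := by
    rw [Complex.ofReal_exp, ← Complex.exp_add, Complex.re_add_im]
  have hnorm : ‖z t‖ = ‖z a‖ * Real.exp J.re := by
    rw [hzt, norm_mul, Complex.norm_exp]
  rw [hJim, hnorm, hzt, hexp]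
  push_cast
  ring

theorem abs_two_mul_sub_le_of_abs_le_mul {M p s e : ℝ} (hM : 0 ≤ M) (he : |e| ≤ M * |s|) :
    |2 * p * s - 2 * p * e| ≤ (M + 1) * (p ^ 2 + s ^ 2) := by
  have hps : 2 * |p| * |s| ≤ p ^ 2 + s ^ 2 := by
    simpa only [sq_abs] using two_mul_le_add_sq |p| |s|
  calc |2 * p * s - 2 * p * e| ≤ |2 * p * s| + |2 * p * e| := abs_sub _ _
    _ = 2 * |p| * |s| + 2 * |p| * |e| := by simp only [abs_mul, abs_two]
    _ ≤ 2 * |p| * |s| + 2 * |p| * (M * |s|) := by gcongr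
    _ = (M + 1) * (2 * |p| * |s|) := by ring
    _ ≤ (M + 1) * (p ^ 2 + s ^ 2) := by gcongr

theorem abs_comp_le_of_lipschitzWith {M : ℝ≥0} {g : ℝ → ℝ} {c : ℝ} (hg : LipschitzWith M g)
    (hc : g c = 0) (u : ℝ → ℝ) (t : ℝ) : |(g ∘ u) t| ≤ M * |u t - c| := by
  simpa only [hc, sub_zero, dist_eq, Function.comp_apply] using hg.dist_le_mul (u t) c

theorem sinc_mul_self (s : ℝ) : Real.sinc s * s = sin s := by
  rcases eq_or_ne s 0 with rfl | hs
  · simp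
  · rw [Real.sinc_of_ne_zero hs, div_mul_cancel₀ _ hs]

end Calculus

/-! ### Radial solutions -/

/-- Radial solution of `-Δx = h` on the annulus (or ball) `a ≤ |ξ| ≤ b` in dimension `n + 1` with
zero slope at `a`. The slope `x'` is a separate argument so that no derivative is needed at the
endpoints, and the right-hand side `h` is a function of `t`, so that differences of solutions and
linear equations are covered as well. -/
structure IsRadialSol (n : ℕ) (a b : ℝ) (x x' h : ℝ → ℝ) : Prop where
  left_nonneg : 0 ≤ a
  continuousOn : ContinuousOn x (Icc a b)
  continuousOn_slope : ContinuousOn x' (Icc a b)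
  continuousOn_source : ContinuousOn h (Icc a b)
  hasDerivAt : ∀ t ∈ Ioo a b, HasDerivAt x (x' t) t
  hasDerivAt_flux : ∀ t ∈ Ioo a b, HasDerivAt (fun t => t ^ n * x' t) (-(t ^ n * h t)) t
  slope_left : x' a = 0

namespace IsRadialSol

variable {n : ℕ} {a b : ℝ} {x x' h y y' k : ℝ → ℝ}

theorem of_deriv (ha : 0 ≤ a) (hx : ∀ t ∈ Icc a b, DifferentiableAt ℝ x t)
    (hx' : ContinuousOn (deriv x) (Icc a b)) (hh : ContinuousOn h (Icc a b))
    (hleft : deriv x a = 0)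
    (hflux : ∀ t ∈ Ioc a b, HasDerivAt (fun t => t ^ n * deriv x t) (-(t ^ n * h t)) t) :
    IsRadialSol n a b x (deriv x) h where
  left_nonneg := ha
  continuousOn t ht := (hx t ht).continuousAt.continuousWithinAt
  continuousOn_slope := hx'
  continuousOn_source := hh
  hasDerivAt t ht := (hx t (Ioo_subset_Icc_self ht)).hasDerivAt
  hasDerivAt_flux t ht := hflux t (Ioo_subset_Ioc_self ht)
  slope_left := hleft

theorem sub (H : IsRadialSol n a b x x' h) (H' : IsRadialSol n a b y y' k) :
    IsRadialSol n a b (fun t => x t - y t) (fun t => x' t - y' t) (fun t => h t - k t) where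
  left_nonneg := H.left_nonneg
  continuousOn := H.continuousOn.sub H'.continuousOn
  continuousOn_slope := H.continuousOn_slope.sub H'.continuousOn_slope
  continuousOn_source := H.continuousOn_source.sub H'.continuousOn_source
  hasDerivAt t ht := (H.hasDerivAt t ht).fun_sub (H'.hasDerivAt t ht)
  hasDerivAt_flux t ht := by
    simpa only [mul_sub, neg_sub, neg_sub_neg] using
      (H.hasDerivAt_flux t ht).fun_sub (H'.hasDerivAt_flux t ht)
  slope_left := by rw [H.slope_left, H'.slope_left, sub_zero]

theorem sub_const (H : IsRadialSol n a b x x' h) (c : ℝ) :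
    IsRadialSol n a b (fun t => x t - c) x' h :=
  { H with
    continuousOn := H.continuousOn.sub continuousOn_const
    hasDerivAt := fun t ht => (H.hasDerivAt t ht).sub_const c }

theorem continuousOn_flux (H : IsRadialSol n a b x x' h) :
    ContinuousOn (fun t => t ^ n * x' t) (Icc a b) :=
  (continuous_pow n).continuousOn.mul H.continuousOn_slope

theorem pos (H : IsRadialSol n a b x x' h) {t : ℝ} (ht : t ∈ Ioc a b) : 0 < t :=
  H.left_nonneg.trans_lt ht.1

theorem hasDerivAt_slope (H : IsRadialSol n a b x x' h) {t : ℝ} (ht : t ∈ Ioo a b) :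
    HasDerivAt x' (-h t - n * x' t / t) t := by
  have h0 : 0 < t := H.pos (Ioo_subset_Ioc_self ht)
  have hquot := (H.hasDerivAt_flux t ht).div (hasDerivAt_pow n t) (pow_pos h0 n).ne'
  refine (hquot.congr_of_eventuallyEq ?_).congr_deriv ?_
  · filter_upwards [lt_mem_nhds h0] with s hs
    exact (mul_div_cancel_left₀ _ (pow_pos hs n).ne').symm
  · rcases n with _ | m
    · simp
    · simp only [Nat.add_sub_cancel]
      field_simp
      ring

theorem antitoneOn_energy {g G : ℝ → ℝ} (H : IsRadialSol n a b x x' (g ∘ x))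
    (hG : ∀ s, HasDerivAt G (g s) s) :
    AntitoneOn (fun t => x' t ^ 2 / 2 + G (x t)) (Icc a b) := by
  have hGc : Continuous G := continuous_iff_continuousAt.2 fun s => (hG s).continuousAt
  have key : MonotoneOn (fun t => -(x' t ^ 2 / 2 + G (x t))) (Icc a b) := by
    refine monotoneOn_Icc_of_hasDerivAt_nonneg (f' := fun t => n * x' t ^ 2 / t)
      (((H.continuousOn_slope.pow 2).div_const 2).add (hGc.comp_continuousOn H.continuousOn)).neg
      (fun t ht => ?_) fun t ht => ?_
    · have h0 := (H.pos (Ioo_subset_Ioc_self ht)).ne'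
      refine ((((H.hasDerivAt_slope ht).fun_pow 2).div_const 2).fun_add
        ((hG (x t)).comp t (H.hasDerivAt t ht))).fun_neg.congr_deriv ?_
      simp only [Function.comp_apply]
      push_cast
      field_simp
      ring
    · have h0 := H.pos (Ioo_subset_Ioc_self ht)
      positivity
  exact fun s hs t ht hst => neg_le_neg_iff.1 (key hs ht hst)

theorem monotoneOn_pow_mul_energy {g G : ℝ → ℝ} (H : IsRadialSol n a b x x' (g ∘ x))
    (hG : ∀ s, HasDerivAt G (g s) s) (hG0 : ∀ s, 0 ≤ G s) :
    MonotoneOn (fun t => t ^ (2 * n) * (x' t ^ 2 / 2 + G (x t))) (Icc a b) := by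
  have hGc : Continuous G := continuous_iff_continuousAt.2 fun s => (hG s).continuousAt
  have key : MonotoneOn (fun t => (t ^ n * x' t) ^ 2 / 2 + t ^ (2 * n) * G (x t)) (Icc a b) := by
    refine monotoneOn_Icc_of_hasDerivAt_nonneg
      (f' := fun t => ((2 * n : ℕ) : ℝ) * t ^ (2 * n - 1) * G (x t))
      (((H.continuousOn_flux.pow 2).div_const 2).add
        ((continuous_pow _).continuousOn.mul (hGc.comp_continuousOn H.continuousOn)))
      (fun t ht => ?_) fun t ht => ?_
    · refine ((((H.hasDerivAt_flux t ht).fun_pow 2).div_const 2).fun_add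
        ((hasDerivAt_pow (2 * n) t).fun_mul
          ((hG (x t)).comp t (H.hasDerivAt t ht)))).congr_deriv ?_
      simp only [Function.comp_apply]
      push_cast
      ring
    · have h0 := H.pos (Ioo_subset_Ioc_self ht)
      have := hG0 (x t)
      positivity
  refine key.congr fun t _ => ?_
  ring

section LinearBound

variable {M : ℝ}

theorem hasDerivAt_slope_sq_add_sq (H : IsRadialSol n a b x x' h) {t : ℝ} (ht : t ∈ Ioo a b) :
    HasDerivAt (fun t => x' t ^ 2 + x t ^ 2)
      (2 * x' t * x t - 2 * x' t * h t - 2 * n / t * x' t ^ 2) t := by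
  have h0 := (H.pos (Ioo_subset_Ioc_self ht)).ne'
  refine (((H.hasDerivAt_slope ht).fun_pow 2).fun_add
    ((H.hasDerivAt t ht).fun_pow 2)).congr_deriv ?_
  push_cast
  field_simp
  ring

theorem continuousOn_slope_sq_add_sq (H : IsRadialSol n a b x x' h) :
    ContinuousOn (fun t => x' t ^ 2 + x t ^ 2) (Icc a b) :=
  (H.continuousOn_slope.pow 2).add (H.continuousOn.pow 2)

theorem slope_sq_add_sq_le_exp_mul_sq_left (H : IsRadialSol n a b x x' h) (hM : 0 ≤ M)
    (hh : ∀ t ∈ Ioo a b, |h t| ≤ M * |x t|) {t : ℝ} (ht : t ∈ Icc a b) :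
    x' t ^ 2 + x t ^ 2 ≤ exp ((M + 1) * (t - a)) * x a ^ 2 := by
  have hsub : Icc a t ⊆ Icc a b := Icc_subset_Icc_right ht.2
  have := exp_integral_mul_le_of_mul_le_deriv (f := fun t => -(x' t ^ 2 + x t ^ 2))
    (m := fun _ => M + 1) ht.1
    (H.continuousOn_slope_sq_add_sq.mono hsub).neg continuousOn_const
    (fun s hs => (H.hasDerivAt_slope_sq_add_sq ⟨hs.1, hs.2.trans_le ht.2⟩).fun_neg)
    (fun s hs => by
      have hs' : s ∈ Ioo a b := ⟨hs.1, hs.2.trans_le ht.2⟩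
      have h0 := H.pos (Ioo_subset_Ioc_self hs')
      have hdrag : 0 ≤ 2 * n / s * x' s ^ 2 := by positivity
      linarith [(abs_le.1 (abs_two_mul_sub_le_of_abs_le_mul (p := x' s) hM (hh s hs'))).2])
  simp only [intervalIntegral.integral_const, smul_eq_mul, H.slope_left] at this
  rw [mul_comm (M + 1)]
  linarith

theorem eq_zero_of_left_eq_zero (H : IsRadialSol n a b x x' h) (hM : 0 ≤ M)
    (hh : ∀ t ∈ Ioo a b, |h t| ≤ M * |x t|) (ha : x a = 0) {t : ℝ} (ht : t ∈ Icc a b) :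
    x t = 0 ∧ x' t = 0 := by
  have := H.slope_sq_add_sq_le_exp_mul_sq_left hM hh ht
  rw [ha, zero_pow two_ne_zero, mul_zero] at this
  constructor <;> nlinarith [sq_nonneg (x t), sq_nonneg (x' t)]

theorem left_eq_zero_of_eq_zero (H : IsRadialSol n a b x x' h) (hM : 0 ≤ M)
    (hh : ∀ t ∈ Ioo a b, |h t| ≤ M * |x t|) {s : ℝ} (hs : s ∈ Icc a b) (hxs : x s = 0)
    (hxs' : x' s = 0) : x a = 0 := by
  -- The drag `n / t` is not integrable at `t = 0`, so uniqueness is run backwards only down to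
  -- `e > a` and passes to `a` by continuity.
  have hzero : ∀ e ∈ Ioc a s, x e = 0 := fun e he => by
    have hpos : ∀ t ∈ Icc e s, 0 < t := fun t ht => (H.left_nonneg.trans_lt he.1).trans_le ht.1
    have hsub : Icc e s ⊆ Icc a b := Icc_subset_Icc he.1.le hs.2
    have := exp_integral_mul_le_of_mul_le_deriv (m := fun t => -(2 * n / t + (M + 1))) he.2
      (H.continuousOn_slope_sq_add_sq.mono hsub)
      ((continuousOn_const.div continuousOn_id fun t ht => (hpos t ht).ne').add
        continuousOn_const).neg
      (fun t ht => H.hasDerivAt_slope_sq_add_sq ⟨he.1.trans ht.1, ht.2.trans_le hs.2⟩)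
      (fun t ht => by
        have ht' : t ∈ Ioo a b := ⟨he.1.trans ht.1, ht.2.trans_le hs.2⟩
        have h0 := hpos t (Ioo_subset_Icc_self ht)
        have hdrag : 0 ≤ 2 * n / t * x t ^ 2 := by positivity
        linarith [(abs_le.1 (abs_two_mul_sub_le_of_abs_le_mul (p := x' t) hM (hh t ht'))).1])
    rw [hxs, hxs', zero_pow two_ne_zero, add_zero] at this
    have hE := nonpos_of_mul_nonpos_right this (exp_pos _)
    exact pow_eq_zero_iff two_ne_zero |>.1
      (le_antisymm (by linarith [sq_nonneg (x' e)]) (sq_nonneg _))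
  rcases hs.1.eq_or_lt with rfl | has
  · exact hxs
  · have hzero' : EqOn x 0 (Icc a s) := Set.EqOn.of_subset_closure (fun e he => hzero e he)
      (H.continuousOn.mono (Icc_subset_Icc_right hs.2)) continuousOn_const Ioc_subset_Icc_self
      (closure_Ioc has.ne).ge
    exact hzero' (left_mem_Icc.2 has.le)

end LinearBound

end IsRadialSol

/-! ### The Prüfer angle -/

/-- The point `x - i tⁿ x'` of the phase plane `ℂ`, whose argument is the Prüfer angle of the
radial function `x` with slope `x'`. -/
noncomputable def phase (n : ℕ) (x x' : ℝ → ℝ) (t : ℝ) : ℂ :=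
  x t - (t ^ n * x' t : ℝ) * Complex.I

/-- The angular velocity about the origin of the phase point along `(tⁿ x')' = -tⁿ h`. -/
noncomputable def angularVelocity (n : ℕ) (x x' h : ℝ → ℝ) (t : ℝ) : ℝ :=
  t ^ n * (h t * x t + x' t ^ 2) / ‖phase n x x' t‖ ^ 2

/-- The Prüfer angle of the phase point, normalised to vanish at `a`. It is defined by integration
rather than as an argument so as to be continuous in `t`. -/
noncomputable def angle (n : ℕ) (a : ℝ) (x x' h : ℝ → ℝ) (t : ℝ) : ℝ :=
  ∫ s in a..t, angularVelocity n x x' h s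

section Phase

variable {n : ℕ} {x x' : ℝ → ℝ} {t : ℝ}

@[simp] theorem phase_re : (phase n x x' t).re = x t := by
  simp [phase, -Complex.ofReal_mul]

@[simp] theorem phase_im : (phase n x x' t).im = -(t ^ n * x' t) := by
  simp [phase, -Complex.ofReal_mul]

theorem phase_eq_zero_iff : phase n x x' t = 0 ↔ x t = 0 ∧ t ^ n * x' t = 0 := by
  simp [Complex.ext_iff]

theorem angle_left (a : ℝ) (h : ℝ → ℝ) : angle n a x x' h a = 0 :=
  intervalIntegral.integral_same

theorem angularVelocity_nonneg {h : ℝ → ℝ} (ht : 0 ≤ t) (hhx : 0 ≤ h t * x t) :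
    0 ≤ angularVelocity n x x' h t := by
  unfold angularVelocity
  positivity

end Phase

namespace IsRadialSol

variable {n : ℕ} {a b : ℝ} {x x' h y y' k : ℝ → ℝ}

theorem continuousOn_phase (H : IsRadialSol n a b x x' h) :
    ContinuousOn (phase n x x') (Icc a b) :=
  (Complex.continuous_ofReal.comp_continuousOn H.continuousOn).sub
    ((Complex.continuous_ofReal.comp_continuousOn H.continuousOn_flux).mul continuousOn_const)

theorem continuousOn_angularVelocity (H : IsRadialSol n a b x x' h)
    (hne : ∀ t ∈ Icc a b, phase n x x' t ≠ 0) :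
    ContinuousOn (angularVelocity n x x' h) (Icc a b) :=
  ((continuous_pow n).continuousOn.mul ((H.continuousOn_source.mul H.continuousOn).add
    (H.continuousOn_slope.pow 2))).div (H.continuousOn_phase.norm.pow 2)
    fun t ht => pow_ne_zero 2 (norm_ne_zero_iff.2 (hne t ht))

theorem continuousOn_angle (H : IsRadialSol n a b x x' h) (hab : a ≤ b)
    (hne : ∀ t ∈ Icc a b, phase n x x' t ≠ 0) : ContinuousOn (angle n a x x' h) (Icc a b) :=
  continuousOn_primitive hab (H.continuousOn_angularVelocity hne)

theorem hasDerivAt_angle (H : IsRadialSol n a b x x' h)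
    (hne : ∀ t ∈ Icc a b, phase n x x' t ≠ 0) {t : ℝ} (ht : t ∈ Ioo a b) :
    HasDerivAt (angle n a x x' h) (angularVelocity n x x' h t) t :=
  hasDerivAt_primitive (H.continuousOn_angularVelocity hne) ht

theorem phase_eq_sign_mul_norm_mul_exp_angle (H : IsRadialSol n a b x x' h)
    (hne : ∀ t ∈ Icc a b, phase n x x' t ≠ 0) {t : ℝ} (ht : t ∈ Icc a b) :
    phase n x x' t =
      Real.sign (x a) * ‖phase n x x' t‖ * Complex.exp (angle n a x x' h t * Complex.I) := by
  have hz' : ContinuousOn (fun s => (x' s : ℂ) + (s ^ n * h s : ℝ) * Complex.I) (Icc a b) :=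
    (Complex.continuous_ofReal.comp_continuousOn H.continuousOn_slope).add
      ((Complex.continuous_ofReal.comp_continuousOn
        ((continuous_pow n).continuousOn.mul H.continuousOn_source)).mul continuousOn_const)
  have hd : ∀ s ∈ Ioo a b, HasDerivAt (phase n x x')
      ((x' s : ℂ) + (s ^ n * h s : ℝ) * Complex.I) s := fun s hs => by
    refine ((H.hasDerivAt s hs).ofReal_comp.fun_sub
      ((H.hasDerivAt_flux s hs).ofReal_comp.mul_const Complex.I)).congr_deriv ?_
    push_cast
    ring
  have hspeed : ∀ s, (((x' s : ℂ) + (s ^ n * h s : ℝ) * Complex.I) / phase n x x' s).im =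
      angularVelocity n x x' h s := fun s => by
    rw [Complex.div_im, ← sub_div, Complex.normSq_eq_norm_sq, angularVelocity]
    congr 1
    simp only [Complex.add_re, Complex.add_im, Complex.re_ofReal_mul, Complex.im_ofReal_mul,
      Complex.ofReal_re, Complex.ofReal_im, Complex.I_re, Complex.I_im, phase_re, phase_im]
    ring
  have hpolar := norm_mul_eq_norm_mul_exp_integral_im H.continuousOn_phase hz' hd hne ht
  have hpa : phase n x x' a = x a := by simp [phase, H.slope_left]
  have hxa : x a ≠ 0 := fun h0 =>
    hne a (left_mem_Icc.2 (ht.1.trans ht.2)) (by rw [hpa, h0, Complex.ofReal_zero])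
  have hsign : ((x a : ℝ) : ℂ) = |x a| * Real.sign (x a) := by
    rcases hxa.lt_or_gt with hneg | hpos
    · simp [Real.sign_of_neg hneg, abs_of_neg hneg]
    · simp [Real.sign_of_pos hpos, abs_of_pos hpos]
  simp only [hspeed, hpa, Complex.norm_real, Real.norm_eq_abs] at hpolar
  refine mul_left_cancel₀ (Complex.ofReal_ne_zero.2 (abs_ne_zero.2 hxa)) ?_
  rw [hpolar, hsign, angle]
  ring

theorem eq_sign_mul_norm_phase_mul_cos (H : IsRadialSol n a b x x' h)
    (hne : ∀ t ∈ Icc a b, phase n x x' t ≠ 0) {t : ℝ} (ht : t ∈ Icc a b) :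
    x t = Real.sign (x a) * ‖phase n x x' t‖ * cos (angle n a x x' h t) := by
  have := congrArg Complex.re (H.phase_eq_sign_mul_norm_mul_exp_angle hne ht)
  rwa [phase_re, ← Complex.ofReal_mul, Complex.re_ofReal_mul, Complex.exp_ofReal_mul_I_re] at this

theorem flux_eq_neg_sign_mul_norm_phase_mul_sin (H : IsRadialSol n a b x x' h)
    (hne : ∀ t ∈ Icc a b, phase n x x' t ≠ 0) {t : ℝ} (ht : t ∈ Icc a b) :
    t ^ n * x' t = -(Real.sign (x a) * ‖phase n x x' t‖ * sin (angle n a x x' h t)) := by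
  have := congrArg Complex.im (H.phase_eq_sign_mul_norm_mul_exp_angle hne ht)
  rw [phase_im, ← Complex.ofReal_mul, Complex.im_ofReal_mul, Complex.exp_ofReal_mul_I_im] at this
  linarith

theorem sign_left_mul_norm_phase_ne_zero (H : IsRadialSol n a b x x' h)
    (hne : ∀ t ∈ Icc a b, phase n x x' t ≠ 0) {t : ℝ} (ht : t ∈ Icc a b) :
    Real.sign (x a) * ‖phase n x x' t‖ ≠ 0 := by
  refine fun h0 => hne t ht ?_
  rw [H.phase_eq_sign_mul_norm_mul_exp_angle hne ht]
  exact_mod_cast by simp [h0]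

theorem cos_angle_eq_zero_iff (H : IsRadialSol n a b x x' h)
    (hne : ∀ t ∈ Icc a b, phase n x x' t ≠ 0) {t : ℝ} (ht : t ∈ Icc a b) :
    cos (angle n a x x' h t) = 0 ↔ x t = 0 := by
  rw [H.eq_sign_mul_norm_phase_mul_cos hne ht,
    mul_eq_zero_iff_left (H.sign_left_mul_norm_phase_ne_zero hne ht)]

theorem sin_angle_eq_zero_iff (H : IsRadialSol n a b x x' h)
    (hne : ∀ t ∈ Icc a b, phase n x x' t ≠ 0) {t : ℝ} (ht : t ∈ Icc a b) :
    sin (angle n a x x' h t) = 0 ↔ t ^ n * x' t = 0 := by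
  rw [H.flux_eq_neg_sign_mul_norm_phase_mul_sin hne ht, neg_eq_zero,
    mul_eq_zero_iff_left (H.sign_left_mul_norm_phase_ne_zero hne ht)]

end IsRadialSol

/-- The slope of `±x`, normalised so that its phase point lies on the unit circle; the sign makes
the phase point start at `1`. -/
noncomputable def unitSlope (n : ℕ) (a : ℝ) (x x' : ℝ → ℝ) (t : ℝ) : ℝ :=
  Real.sign (x a) * x' t / ‖phase n x x' t‖

theorem prufer_velocity_sub {τ μ P Q α β : ℝ} (hα : sin α = -(τ * P)) (hβ : sin β = -(τ * Q)) :
    τ * (μ * cos α ^ 2 + P ^ 2) - τ * (μ * cos β ^ 2 + Q ^ 2) =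
      (-(P * cos β + Q * cos α) - μ * τ * sin (α + β)) * sin (α - β) := by
  have hα2 := sin_sq_add_cos_sq α
  have hβ2 := sin_sq_add_cos_sq β
  rw [sin_sub, sin_add]
  rw [hα] at hα2 ⊢
  rw [hβ] at hβ2 ⊢
  linear_combination (-τ * μ * cos α ^ 2 - τ * P ^ 2) * hβ2 +
    (τ * μ * cos β ^ 2 + τ * Q ^ 2) * hα2

namespace IsRadialSol

variable {n : ℕ} {a b : ℝ} {x x' h y y' k : ℝ → ℝ}

theorem sign_left_sq (H : IsRadialSol n a b x x' h) (hab : a ≤ b)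
    (hne : ∀ t ∈ Icc a b, phase n x x' t ≠ 0) : Real.sign (x a) ^ 2 = 1 := by
  have hxa : x a ≠ 0 := fun h0 =>
    hne a (left_mem_Icc.2 hab) (phase_eq_zero_iff.2 ⟨h0, by rw [H.slope_left, mul_zero]⟩)
  rcases Real.sign_apply_eq_of_ne_zero _ hxa with hs | hs <;> norm_num [hs]

theorem continuousOn_unitSlope (H : IsRadialSol n a b x x' h)
    (hne : ∀ t ∈ Icc a b, phase n x x' t ≠ 0) : ContinuousOn (unitSlope n a x x') (Icc a b) :=
  (H.continuousOn_slope.const_mul _).div H.continuousOn_phase.norm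
    fun t ht => norm_ne_zero_iff.2 (hne t ht)

theorem sin_angle_eq (H : IsRadialSol n a b x x' h)
    (hne : ∀ t ∈ Icc a b, phase n x x' t ≠ 0) {t : ℝ} (ht : t ∈ Icc a b) :
    sin (angle n a x x' h t) = -(t ^ n * unitSlope n a x x' t) := by
  have hnorm := norm_ne_zero_iff.2 (hne t ht)
  have hflux := H.flux_eq_neg_sign_mul_norm_phase_mul_sin hne ht
  have hsign := H.sign_left_sq (ht.1.trans ht.2) hne
  rw [unitSlope, mul_div_assoc', ← neg_div, eq_div_iff hnorm]
  linear_combination Real.sign (x a) * hflux -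
    ‖phase n x x' t‖ * sin (angle n a x x' h t) * hsign

theorem angularVelocity_eq (H : IsRadialSol n a b x x' h)
    (hne : ∀ t ∈ Icc a b, phase n x x' t ≠ 0) {t : ℝ} (ht : t ∈ Icc a b) :
    angularVelocity n x x' h t =
      t ^ n * (h t * x t / ‖phase n x x' t‖ ^ 2 + unitSlope n a x x' t ^ 2) := by
  rw [unitSlope, div_pow, mul_pow, H.sign_left_sq (ht.1.trans ht.2) hne, one_mul, ← add_div,
    mul_div_assoc', angularVelocity]

theorem mul_cos_angle_sq (H : IsRadialSol n a b x x' h)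
    (hne : ∀ t ∈ Icc a b, phase n x x' t ≠ 0) {t : ℝ} (ht : t ∈ Icc a b) (μ : ℝ) :
    μ * cos (angle n a x x' h t) ^ 2 = μ * x t ^ 2 / ‖phase n x x' t‖ ^ 2 := by
  have hnorm := norm_ne_zero_iff.2 (hne t ht)
  rw [eq_div_iff (pow_ne_zero 2 hnorm)]
  conv_rhs => rw [H.eq_sign_mul_norm_phase_mul_cos hne ht, mul_pow, mul_pow,
    H.sign_left_sq (ht.1.trans ht.2) hne]
  ring

/-- Sturm comparison: along the two solutions the angle difference `δ` satisfies
`δ' ≥ κ sin δ = (κ sinc δ) δ`, so that it stays nonnegative by Grönwall's lemma. -/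
theorem angle_le_angle {μ : ℝ → ℝ} (H : IsRadialSol n a b x x' h)
    (K : IsRadialSol n a b y y' k) (hab : a ≤ b) (hμ : ContinuousOn μ (Icc a b))
    (hne : ∀ t ∈ Icc a b, phase n x x' t ≠ 0) (hne' : ∀ t ∈ Icc a b, phase n y y' t ≠ 0)
    (hh : ∀ t ∈ Icc a b, h t * x t ≤ μ t * x t ^ 2)
    (hk : ∀ t ∈ Icc a b, μ t * y t ^ 2 ≤ k t * y t) :
    angle n a x x' h b ≤ angle n a y y' k b := by
  set θ := angle n a x x' h with hθ
  set φ := angle n a y y' k with hφ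
  set P := unitSlope n a x x'
  set Q := unitSlope n a y y'
  have hθc : ContinuousOn θ (Icc a b) := H.continuousOn_angle hab hne
  have hφc : ContinuousOn φ (Icc a b) := K.continuousOn_angle hab hne'
  have hvelocity : ∀ t ∈ Icc a b,
      t ^ n * (μ t * cos (φ t) ^ 2 + Q t ^ 2) - t ^ n * (μ t * cos (θ t) ^ 2 + P t ^ 2) ≤
        angularVelocity n y y' k t - angularVelocity n x x' h t := fun t ht => by
    have ht0 := pow_nonneg (H.left_nonneg.trans ht.1) n
    rw [H.angularVelocity_eq hne ht, K.angularVelocity_eq hne' ht, H.mul_cos_angle_sq hne ht,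
      K.mul_cos_angle_sq hne' ht]
    gcongr t ^ n * (?_ / _ + _) - t ^ n * (?_ / _ + _)
    exacts [hk t ht, hh t ht]
  have hcos {f : ℝ → ℝ} (hf : ContinuousOn f (Icc a b)) := continuous_cos.comp_continuousOn hf
  have key := exp_integral_mul_le_of_mul_le_deriv (f := fun t => φ t - θ t)
    (m := fun t => (-(Q t * cos (θ t) + P t * cos (φ t)) - μ t * t ^ n * sin (φ t + θ t)) *
      Real.sinc (φ t - θ t)) hab (hφc.sub hθc)
    (((((K.continuousOn_unitSlope hne').mul (hcos hθc)).add
      ((H.continuousOn_unitSlope hne).mul (hcos hφc))).neg.sub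
        ((hμ.mul (continuous_pow n).continuousOn).mul
          (continuous_sin.comp_continuousOn (hφc.add hθc)))).mul
      (Real.continuous_sinc.comp_continuousOn (hφc.sub hθc)))
    (fun t ht => (K.hasDerivAt_angle hne' ht).fun_sub (H.hasDerivAt_angle hne ht))
    (fun t ht => by
      have ht' := Ioo_subset_Icc_self ht
      rw [mul_assoc, sinc_mul_self,
        ← prufer_velocity_sub (K.sin_angle_eq hne' ht') (H.sin_angle_eq hne ht')]
      exact hvelocity t ht')
  simpa [hθ, hφ, angle_left] using key

theorem monotoneOn_angle (H : IsRadialSol n a b x x' h)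
    (hne : ∀ t ∈ Icc a b, phase n x x' t ≠ 0) (hhx : ∀ t ∈ Icc a b, 0 ≤ h t * x t) :
    MonotoneOn (angle n a x x' h) (Icc a b) := by
  rcases le_or_gt a b with hab | hab
  · exact monotoneOn_Icc_of_hasDerivAt_nonneg (H.continuousOn_angle hab hne)
      (fun t ht => H.hasDerivAt_angle hne ht) fun t ht =>
        angularVelocity_nonneg (H.left_nonneg.trans ht.1.le) (hhx t (Ioo_subset_Icc_self ht))
  · exact (subsingleton_Icc_of_ge hab.le).monotoneOn _

theorem angle_lt_angle_of_eq_zero (H : IsRadialSol n a b x x' h)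
    (hne : ∀ t ∈ Icc a b, phase n x x' t ≠ 0) (hhx : ∀ t ∈ Icc a b, 0 ≤ h t * x t) {s t : ℝ}
    (hs : s ∈ Ioo a b) (hxs : x s = 0) (hst : s < t) (htb : t ≤ b) :
    angle n a x x' h s < angle n a x x' h t := by
  have hs' := Ioo_subset_Icc_self hs
  have hflux : s ^ n * x' s ≠ 0 := fun h0 => hne s hs' (phase_eq_zero_iff.2 ⟨hxs, h0⟩)
  have hvelocity : 0 < angularVelocity n x x' h s := by
    have hs0 := H.pos (Ioo_subset_Ioc_self hs)
    have hx' := right_ne_zero_of_mul hflux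
    have hnorm := norm_pos_iff.2 (hne s hs')
    rw [angularVelocity, hxs, mul_zero, zero_add]
    positivity
  have hslope := ((hasDerivAt_iff_tendsto_slope.1 (H.hasDerivAt_angle hne hs)).mono_left
    (nhdsWithin_mono s (fun r hr => ne_of_gt hr : Ioi s ⊆ {s}ᶜ))).eventually_const_lt hvelocity
  obtain ⟨r, hr, hrI⟩ := (hslope.and (Ioo_mem_nhdsGT hst)).exists
  exact ((slope_pos_iff hrI.1).1 hr).trans_le (H.monotoneOn_angle hne hhx
    ⟨hs.1.le.trans hrI.1.le, hrI.2.le.trans htb⟩ ⟨hs.1.le.trans hst.le, htb⟩ hrI.2.le)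

end IsRadialSol

theorem exists_nat_mul_pi_eq {α : ℝ} (hsin : sin α = 0) (hα : 0 ≤ α) : ∃ j : ℕ, α = j * π := by
  obtain ⟨j, rfl⟩ := sin_eq_zero_iff.1 hsin
  have hj : 0 ≤ j := by exact_mod_cast nonneg_of_mul_nonneg_left hα pi_pos
  lift j to ℕ using hj
  exact ⟨j, by push_cast; rfl⟩

theorem exists_nat_lt_add_half_mul_pi_eq {α : ℝ} {j : ℕ} (hcos : cos α = 0) (hα : 0 ≤ α)
    (hαj : α ≤ j * π) : ∃ m < j, α = (m + 1 / 2) * π := by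
  obtain ⟨m, rfl⟩ := cos_eq_zero_iff.1 hcos
  have hm0 : (0 : ℝ) ≤ 2 * m + 1 := nonneg_of_mul_nonneg_left (by linarith) pi_pos
  have hmj : (2 * m + 1 : ℝ) ≤ 2 * j := le_of_mul_le_mul_right (by linarith) pi_pos
  norm_cast at hm0 hmj
  lift m to ℕ using by lia
  exact ⟨m, by lia, by push_cast; ring⟩

theorem IsRadialSol.nat_mul_pi_le_angle {n : ℕ} {a b : ℝ} {x x' h : ℝ → ℝ}
    (H : IsRadialSol n a b x x' h) (hab : a ≤ b) (hne : ∀ t ∈ Icc a b, phase n x x' t ≠ 0)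
    (hhx : ∀ t ∈ Icc a b, 0 ≤ h t * x t) (hb : x' b = 0) {k : ℕ}
    (hzeros : {t ∈ Ioo a b | x t = 0}.encard = k) : k * π ≤ angle n a x x' h b := by
  set θ := angle n a x x' h with hθ
  have hbI := right_mem_Icc.2 hab
  have hθ0 : ∀ t ∈ Icc a b, 0 ≤ θ t := fun t ht => by
    simpa only [hθ, angle_left] using H.monotoneOn_angle hne hhx (left_mem_Icc.2 hab) ht ht.1
  obtain ⟨j, hj : θ b = j * π⟩ := exists_nat_mul_pi_eq
    ((H.sin_angle_eq_zero_iff hne hbI).2 (by rw [hb, mul_zero])) (hθ0 b hbI)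
  have hzero : ∀ t ∈ {t ∈ Ioo a b | x t = 0}, ∃ m < j, θ t = (m + 1 / 2) * π := fun t ht => by
    have htI := Ioo_subset_Icc_self ht.1
    exact exists_nat_lt_add_half_mul_pi_eq ((H.cos_angle_eq_zero_iff hne htI).2 ht.2) (hθ0 t htI)
      (hj ▸ H.monotoneOn_angle hne hhx htI hbI htI.2)
  choose! m hmj hm using hzero
  have hstrict : StrictMonoOn θ {t ∈ Ioo a b | x t = 0} := fun s hs t ht hst =>
    H.angle_lt_angle_of_eq_zero hne hhx hs.1 hs.2 hst ht.1.2.le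
  have hinj : InjOn m {t ∈ Ioo a b | x t = 0} := fun s hs t ht hst =>
    hstrict.injOn hs ht (by rw [hm s hs, hm t ht, hst])
  have hcard := encard_le_encard_of_injOn (t := (Finset.range j : Set ℕ))
    (fun t ht => by simpa only [Finset.coe_range, mem_Iio] using hmj t ht) hinj
  rw [hzeros, encard_coe_eq_coe_finsetCard, Finset.card_range] at hcard
  rw [hj]
  gcongr
  exact_mod_cast hcard

/-! ### The Cauchy problem -/

/-- The slope `-t⁻ⁿ ∫ₐᵗ sⁿ h` of the solution of `(tⁿ u')' = -tⁿ h`, `u'(a) = 0`, extended by `0` to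
the left of `a` so that it is continuous on `ℝ`. -/
noncomputable def radialSlope (n : ℕ) (a : ℝ) (h : ℝ → ℝ) (t : ℝ) : ℝ :=
  -(∫ s in a..max t a, s ^ n * h s) / max t a ^ n

section RadialSlope

variable {n : ℕ} {a : ℝ} {h k : ℝ → ℝ}

theorem radialSlope_left : radialSlope n a h a = 0 := by simp [radialSlope]

theorem abs_radialSlope_le (ha : 0 ≤ a) (hh : Continuous h) (t : ℝ) :
    |radialSlope n a h t| ≤ ∫ s in a..max t a, |h s| := by
  have ham : a ≤ max t a := le_max_right _ _
  have hm0 : 0 ≤ max t a := ha.trans ham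
  rw [radialSlope, abs_div, abs_neg, abs_of_nonneg (pow_nonneg hm0 n)]
  refine div_le_of_le_mul₀ (pow_nonneg hm0 n)
    (intervalIntegral.integral_nonneg ham fun _ _ => abs_nonneg _) ?_
  rw [mul_comm, ← intervalIntegral.integral_const_mul]
  refine (intervalIntegral.abs_integral_le_integral_abs ham).trans
    (intervalIntegral.integral_mono_on ham (Continuous.intervalIntegrable (by fun_prop) _ _)
      (Continuous.intervalIntegrable (by fun_prop) _ _) fun s hs => ?_)
  have hs0 : 0 ≤ s := ha.trans hs.1
  rw [abs_mul, abs_of_nonneg (pow_nonneg hs0 n)]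
  gcongr
  exact hs.2

theorem continuous_radialSlope (ha : 0 ≤ a) (hh : Continuous h) :
    Continuous (radialSlope n a h) := by
  have hprim {f : ℝ → ℝ} (hf : Continuous f) : Continuous fun t => ∫ s in a..max t a, f s :=
    (intervalIntegral.continuous_primitive (fun _ _ => hf.intervalIntegrable _ _) a).comp
      (continuous_id.max continuous_const)
  refine continuous_iff_continuousAt.2 fun t => ?_
  rcases (ha.trans (le_max_right t a)).eq_or_lt with hm | hm
  · have hzero : ∫ s in a..max t a, |h s| = 0 := by
      rw [((le_max_right t a).antisymm (hm ▸ ha)).symm, intervalIntegral.integral_same]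
    have hslope : radialSlope n a h t = 0 :=
      abs_nonpos_iff.1 ((abs_radialSlope_le ha hh t).trans hzero.le)
    rw [ContinuousAt, hslope]
    exact squeeze_zero_norm (abs_radialSlope_le ha hh) (hzero ▸ (hprim hh.abs).tendsto t)
  · exact ((hprim ((continuous_pow n).mul hh)).neg.continuousAt).div
      ((continuous_id.max continuous_const).pow n).continuousAt (pow_pos hm n).ne'

theorem radialSlope_sub (hh : Continuous h) (hk : Continuous k) (t : ℝ) :
    radialSlope n a h t - radialSlope n a k t = radialSlope n a (fun s => h s - k s) t := by
  simp only [radialSlope, mul_sub]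
  rw [intervalIntegral.integral_sub (Continuous.intervalIntegrable (by fun_prop) _ _)
    (Continuous.intervalIntegrable (by fun_prop) _ _)]
  ring

theorem hasDerivAt_pow_mul_radialSlope (ha : 0 ≤ a) (hh : Continuous h) {t : ℝ} (ht : a < t) :
    HasDerivAt (fun t => t ^ n * radialSlope n a h t) (-(t ^ n * h t)) t := by
  have hc : Continuous fun s => s ^ n * h s := (continuous_pow n).mul hh
  refine (hc.integral_hasStrictDerivAt a t).hasDerivAt.neg.congr_of_eventuallyEq ?_
  filter_upwards [lt_mem_nhds ht] with s hs
  rw [radialSlope, max_eq_left hs.le, mul_div_cancel₀ _ (pow_pos (ha.trans_lt hs) n).ne',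
    Pi.neg_apply]

theorem integral_const_mul_exp_le {K c : ℝ} (hK : 0 < K) (hc : 0 ≤ c) (t : ℝ) :
    ∫ s in a..t, c * exp (K * s) ≤ c / K * exp (K * t) := by
  rw [intervalIntegral.integral_const_mul, intervalIntegral.integral_comp_mul_left _ hK.ne',
    integral_exp, smul_eq_mul, div_mul_eq_mul_div, mul_div_assoc, inv_mul_eq_div]
  gcongr
  linarith [exp_pos (K * a)]

theorem abs_radialSlope_le_exp {K c t : ℝ} (ha : 0 ≤ a) (hh : Continuous h) (hK : 0 < K)
    (hc : 0 ≤ c) (hat : a ≤ t) (hle : ∀ s ∈ Icc a t, |h s| ≤ c * exp (K * s)) :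
    |radialSlope n a h t| ≤ c / K * exp (K * t) := by
  refine (abs_radialSlope_le ha hh t).trans ?_
  rw [max_eq_left hat]
  exact (intervalIntegral.integral_mono_on hat (hh.abs.intervalIntegrable _ _)
    (Continuous.intervalIntegrable (by fun_prop) _ _) hle).trans (integral_const_mul_exp_le hK hc t)

theorem abs_integral_radialSlope_le_exp {K c t : ℝ} (ha : 0 ≤ a) (hh : Continuous h) (hK : 0 < K)
    (hc : 0 ≤ c) (hat : a ≤ t) (hle : ∀ s ∈ Icc a t, |h s| ≤ c * exp (K * s)) :
    |∫ s in a..t, radialSlope n a h s| ≤ c / K ^ 2 * exp (K * t) := by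
  refine (intervalIntegral.abs_integral_le_integral_abs hat).trans ?_
  rw [pow_two, ← div_div]
  refine (intervalIntegral.integral_mono_on hat
    ((continuous_radialSlope ha hh).abs.intervalIntegrable _ _)
    (Continuous.intervalIntegrable (by fun_prop) _ _) fun s hs => ?_).trans
    (integral_const_mul_exp_le hK (by positivity) t)
  exact abs_radialSlope_le_exp ha hh hK hc hs.1 fun r hr => hle r ⟨hr.1, hr.2.trans hs.2⟩

end RadialSlope

section Picard

variable {n : ℕ} {a b : ℝ} {g : ℝ → ℝ} {M : ℝ≥0}

/-- The right-hand side `g(u)` for `u(s) = exp(κ s) z(s)`, extended continuously from `[a, b]` to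
`ℝ`. The unknown `z` carries the weight that makes the Picard map a contraction for the sup norm. -/
noncomputable def picardSource (g : ℝ → ℝ) (κ : ℝ) (hab : a ≤ b) (z : C(Icc a b, ℝ)) : ℝ → ℝ :=
  IccExtend hab fun s => g (exp (κ * s) * z s)

theorem continuous_picardSource (hg : Continuous g) (κ : ℝ) (hab : a ≤ b) (z : C(Icc a b, ℝ)) :
    Continuous (picardSource g κ hab z) :=
  Continuous.Icc_extend' (by fun_prop)

theorem picardSource_of_mem (g : ℝ → ℝ) (κ : ℝ) (hab : a ≤ b) (z : C(Icc a b, ℝ)) {s : ℝ}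
    (hs : s ∈ Icc a b) : picardSource g κ hab z s = g (exp (κ * s) * z ⟨s, hs⟩) :=
  IccExtend_of_mem hab _ hs

/-- The solution of `(tⁿ u')' = -tⁿ picardSource z`, `u(a) = d`, `u'(a) = 0`. -/
noncomputable def picardSolution (n : ℕ) (g : ℝ → ℝ) (κ d : ℝ) (hab : a ≤ b) (z : C(Icc a b, ℝ))
    (t : ℝ) : ℝ :=
  d + ∫ s in a..t, radialSlope n a (picardSource g κ hab z) s

theorem hasDerivAt_picardSolution (hg : Continuous g) (κ d : ℝ) (ha : 0 ≤ a) (hab : a ≤ b)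
    (z : C(Icc a b, ℝ)) (t : ℝ) :
    HasDerivAt (picardSolution n g κ d hab z) (radialSlope n a (picardSource g κ hab z) t) t :=
  ((continuous_radialSlope ha (continuous_picardSource hg κ hab z)).integral_hasStrictDerivAt
    a t).hasDerivAt.const_add d

theorem abs_picardSource_sub_le (hg : LipschitzWith M g) (κ : ℝ) (hab : a ≤ b)
    (z z' : C(Icc a b, ℝ)) {s : ℝ} (hs : s ∈ Icc a b) :
    |picardSource g κ hab z s - picardSource g κ hab z' s| ≤ M * dist z z' * exp (κ * s) := by
  rw [picardSource_of_mem g κ hab z hs, picardSource_of_mem g κ hab z' hs]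
  calc |g (exp (κ * s) * z ⟨s, hs⟩) - g (exp (κ * s) * z' ⟨s, hs⟩)|
      ≤ M * |exp (κ * s) * z ⟨s, hs⟩ - exp (κ * s) * z' ⟨s, hs⟩| := hg.dist_le_mul _ _
    _ = M * (exp (κ * s) * dist (z ⟨s, hs⟩) (z' ⟨s, hs⟩)) := by
      rw [← mul_sub, abs_mul, abs_of_pos (exp_pos _), Real.dist_eq]
    _ ≤ M * (exp (κ * s) * dist z z') := by
      gcongr
      exact ContinuousMap.dist_apply_le_dist _
    _ = M * dist z z' * exp (κ * s) := by ring

theorem abs_picardSolution_sub_le (hg : LipschitzWith M g) {κ : ℝ} (hκ : 0 < κ) (d : ℝ)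
    (ha : 0 ≤ a) (hab : a ≤ b) (z z' : C(Icc a b, ℝ)) {t : ℝ} (ht : t ∈ Icc a b) :
    |picardSolution n g κ d hab z t - picardSolution n g κ d hab z' t| ≤
      M * dist z z' / κ ^ 2 * exp (κ * t) := by
  have hsource := fun z => continuous_picardSource hg.continuous κ hab z
  have hslope := fun z => continuous_radialSlope (n := n) ha (hsource z)
  rw [picardSolution, picardSolution, add_sub_add_left_eq_sub, ← intervalIntegral.integral_sub
    ((hslope z).intervalIntegrable _ _) ((hslope z').intervalIntegrable _ _)]
  simp only [radialSlope_sub (hsource z) (hsource z')]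
  exact abs_integral_radialSlope_le_exp ha ((hsource z).sub (hsource z')) hκ (by positivity) ht.1
    fun s hs => abs_picardSource_sub_le hg κ hab z z' ⟨hs.1, hs.2.trans ht.2⟩

theorem exists_exp_mul_eq_picardSolution (n : ℕ) (hg : LipschitzWith M g) (ha : 0 ≤ a)
    (hab : a ≤ b) (d : ℝ) :
    ∃ (κ : ℝ) (z : C(Icc a b, ℝ)), ∀ t : Icc a b,
      exp (κ * t) * z t = picardSolution n g κ d hab z t := by
  set κ : ℝ := 1 + 2 * M
  have hκ : 0 < κ := by positivity
  have hcont := fun z => continuous_iff_continuousAt.2 fun t =>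
    (hasDerivAt_picardSolution (n := n) hg.continuous κ d ha hab z t).continuousAt
  let S : C(Icc a b, ℝ) → C(Icc a b, ℝ) := fun z =>
    ⟨fun t => exp (-(κ * t)) * picardSolution n g κ d hab z t, by have := hcont z; fun_prop⟩
  have hS : ContractingWith (1 / 2) S := by
    refine ⟨by norm_num, LipschitzWith.of_dist_le_mul fun z z' => ?_⟩
    refine (ContinuousMap.dist_le (by positivity)).2 fun t => ?_
    have hMκ : M / κ ^ 2 ≤ 1 / 2 := by
      rw [div_le_iff₀ (by positivity)]
      nlinarith [M.2]
    calc dist (S z t) (S z' t)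
        = exp (-(κ * t)) *
            |picardSolution n g κ d hab z t - picardSolution n g κ d hab z' t| := by
          rw [Real.dist_eq, ContinuousMap.coe_mk, ContinuousMap.coe_mk, ← mul_sub, abs_mul,
            abs_of_pos (exp_pos _)]
      _ ≤ exp (-(κ * t)) * (M * dist z z' / κ ^ 2 * exp (κ * t)) := by
          gcongr
          exact abs_picardSolution_sub_le hg hκ d ha hab z z' t.2
      _ = M / κ ^ 2 * dist z z' * exp (-(κ * t) + κ * t) := by
          rw [exp_add]
          ring
      _ = M / κ ^ 2 * dist z z' := by rw [neg_add_cancel, exp_zero, mul_one]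
      _ ≤ (1 / 2 : ℝ≥0) * dist z z' := by
          push_cast
          gcongr
  refine ⟨κ, hS.fixedPoint S, fun t => ?_⟩
  have hfix := congrArg (fun z => exp (κ * t) * z t) hS.fixedPoint_isFixedPt
  simpa only [S, ContinuousMap.coe_mk, ← mul_assoc, ← exp_add, add_neg_cancel, exp_zero,
    one_mul] using hfix.symm

end Picard

theorem phip_two (s : ℝ) : phip 2 s = s := by simp [phip]

theorem exists_cauchySol (N : ℕ) {a b : ℝ} (ha : 0 ≤ a) (hab : a ≤ b) {g : ℝ → ℝ} {M : ℝ≥0}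
    (hg : LipschitzWith M g) (d : ℝ) : ∃ u, CauchySol 2 N a b g u d := by
  obtain ⟨κ, z, hz⟩ := exists_exp_mul_eq_picardSolution (N - 1) hg ha hab d
  set u := picardSolution (N - 1) g κ d hab z
  have hsource := continuous_picardSource hg.continuous κ hab z
  have hslope := continuous_radialSlope (n := N - 1) ha hsource
  have hu : ∀ t, HasDerivAt u _ t := hasDerivAt_picardSolution hg.continuous κ d ha hab z
  have hderiv : deriv u = radialSlope (N - 1) a (picardSource g κ hab z) :=
    funext fun t => (hu t).deriv
  refine ⟨u, fun t _ => (hu t).differentiableAt, ?_, by simp [u, picardSolution], ?_, ?_, ?_⟩ <;>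
    simp only [phip_two, hderiv]
  · exact hslope.continuousOn
  · exact radialSlope_left
  · exact ((continuous_pow _).mul hslope).continuousOn
  · intro t ht
    refine (hasDerivAt_pow_mul_radialSlope ha hsource ht.1).congr_deriv ?_
    rw [picardSource_of_mem g κ hab z (Ioc_subset_Icc_self ht), hz ⟨t, Ioc_subset_Icc_self ht⟩,
      neg_mul]

theorem IsRadialSol.phase_ne_zero {n : ℕ} {a b M : ℝ} {x x' h : ℝ → ℝ}
    (H : IsRadialSol n a b x x' h) (hM : 0 ≤ M) (hh : ∀ t ∈ Ioo a b, |h t| ≤ M * |x t|)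
    (hxa : x a ≠ 0) {t : ℝ} (ht : t ∈ Icc a b) : phase n x x' t ≠ 0 := by
  rw [Ne, phase_eq_zero_iff]
  rintro ⟨hxt, hflux⟩
  rcases ht.1.eq_or_lt with rfl | hat
  · exact hxa hxt
  · have hpow : t ^ n ≠ 0 := (pow_pos (H.pos ⟨hat, ht.2⟩) n).ne'
    exact hxa (H.left_eq_zero_of_eq_zero hM hh ht hxt
      ((mul_eq_zero.1 hflux).resolve_left hpow))

theorem NeumannSol.cauchySol {p a b : ℝ} {N : ℕ} {f u : ℝ → ℝ} (H : NeumannSol p N a b f u) :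
    CauchySol p N a b f u (u a) :=
  ⟨H.1, H.2.1, rfl, H.2.2.2.1, H.2.2.2.2.2⟩

theorem NeumannSol.congr {p a b : ℝ} {N : ℕ} {f g u : ℝ → ℝ} (H : NeumannSol p N a b g u)
    (hfg : ∀ t ∈ Icc a b, g (u t) = f (u t)) : NeumannSol p N a b f u := by
  obtain ⟨hu, hu', hpos, hleft, hright, hflux, hderiv⟩ := H
  exact ⟨hu, hu', hpos, hleft, hright, hflux, fun t ht =>
    hfg t (Ioc_subset_Icc_self ht) ▸ hderiv t ht⟩

/-- Prüfer angle of a trajectory of the Cauchy problem, measured around the equilibrium `c` of the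
nonlinearity `g`. It counts the half-turns of `(u, u')` around `(c, 0)`. -/
noncomputable def shootingAngle (N : ℕ) (a c : ℝ) (g u : ℝ → ℝ) : ℝ → ℝ :=
  angle (N - 1) a (fun t => u t - c) (deriv u) (g ∘ u)

namespace CauchySol

variable {N : ℕ} {a b c d e t : ℝ} {M : ℝ≥0} {g u v : ℝ → ℝ}

theorem left_eq {p : ℝ} (H : CauchySol p N a b g u d) : u a = d := H.2.2.1

theorem isRadialSol (H : CauchySol 2 N a b g u d) (ha : 0 ≤ a) (hg : Continuous g) :
    IsRadialSol (N - 1) a b u (deriv u) (g ∘ u) := by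
  obtain ⟨hu, hu', -, hleft, -, hderiv⟩ := H
  have huc : ContinuousOn u (Icc a b) := fun t ht => (hu t ht).continuousAt.continuousWithinAt
  refine .of_deriv ha hu hu' (hg.comp_continuousOn huc) hleft fun t ht => ?_
  simpa only [phip_two, neg_mul, Function.comp_apply] using hderiv t ht

theorem deriv_sq_add_sq_sub_le (H : CauchySol 2 N a b g u d) (H' : CauchySol 2 N a b g v e)
    (ha : 0 ≤ a) (hg : LipschitzWith M g) (ht : t ∈ Icc a b) :
    (deriv u t - deriv v t) ^ 2 + (u t - v t) ^ 2 ≤ (exp ((M + 1) * (b - a)) * (d - e)) ^ 2 := by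
  have hba : a ≤ b := ht.1.trans ht.2
  have hexp : exp ((M + 1) * (t - a)) ≤ exp ((M + 1) * (b - a)) ^ 2 := by
    rw [← Real.exp_nat_mul, exp_le_exp]
    have : (M + 1) * (t - a) ≤ (M + 1) * (b - a) := by gcongr; exact ht.2
    push_cast
    nlinarith [mul_nonneg (by positivity : (0 : ℝ) ≤ M + 1) (sub_nonneg.2 hba)]
  refine (((H.isRadialSol ha hg.continuous).sub
    (H'.isRadialSol ha hg.continuous)).slope_sq_add_sq_le_exp_mul_sq_left M.coe_nonneg
      (fun s _ => hg.dist_le_mul (u s) (v s)) ht).trans ?_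
  rw [H.left_eq, H'.left_eq, mul_pow]
  gcongr

theorem abs_sub_le (H : CauchySol 2 N a b g u d) (H' : CauchySol 2 N a b g v e)
    (ha : 0 ≤ a) (hg : LipschitzWith M g) (ht : t ∈ Icc a b) :
    |u t - v t| ≤ exp ((M + 1) * (b - a)) * |d - e| := by
  rw [← abs_of_pos (exp_pos ((M + 1) * (b - a))), ← abs_mul]
  refine sq_le_sq.1 ?_
  linarith [H.deriv_sq_add_sq_sub_le H' ha hg ht, sq_nonneg (deriv u t - deriv v t)]

theorem abs_deriv_sub_le (H : CauchySol 2 N a b g u d) (H' : CauchySol 2 N a b g v e)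
    (ha : 0 ≤ a) (hg : LipschitzWith M g) (ht : t ∈ Icc a b) :
    |deriv u t - deriv v t| ≤ exp ((M + 1) * (b - a)) * |d - e| := by
  rw [← abs_of_pos (exp_pos ((M + 1) * (b - a))), ← abs_mul]
  refine sq_le_sq.1 ?_
  linarith [H.deriv_sq_add_sq_sub_le H' ha hg ht, sq_nonneg (u t - v t)]

theorem eq_and_deriv_eq_zero (H : CauchySol 2 N a b g u d) (ha : 0 ≤ a) (hg : LipschitzWith M g)
    (hd : g d = 0) (ht : t ∈ Icc a b) : u t = d ∧ deriv u t = 0 := by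
  have := ((H.isRadialSol ha hg.continuous).sub_const d).eq_zero_of_left_eq_zero M.coe_nonneg
    (fun s _ => abs_comp_le_of_lipschitzWith hg hd u s) (sub_eq_zero.2 H.left_eq) ht
  exact ⟨sub_eq_zero.1 this.1, this.2⟩

theorem eq_left_of_deriv_eq_zero (H : CauchySol 2 N a b g u d) (ha : 0 ≤ a)
    (hg : LipschitzWith M g) (ht : t ∈ Icc a b) (hgt : g (u t) = 0) (hut : deriv u t = 0) :
    u t = d := by
  have := ((H.isRadialSol ha hg.continuous).sub_const (u t)).left_eq_zero_of_eq_zero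
    M.coe_nonneg (fun s _ => abs_comp_le_of_lipschitzWith hg hgt u s) ht (sub_self _) hut
  rw [H.left_eq] at this
  linarith

theorem pos_of_deriv_eq_zero (H : CauchySol 2 N a b g u d) (ha : 0 ≤ a) (hg : LipschitzWith M g)
    (hg0 : ∀ s ≤ 0, g s = 0) (hd : 0 < d) {s : ℝ} (hs : s ∈ Icc a b) (hus : deriv u s = 0)
    (ht : t ∈ Icc a s) : 0 < u t := by
  have hR := H.isRadialSol ha hg.continuous
  obtain ⟨m, hm, hmin⟩ := isCompact_Icc.exists_isMinOn (nonempty_Icc.2 hs.1)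
    (hR.continuousOn.mono (Icc_subset_Icc_right hs.2))
  refine lt_of_lt_of_le ?_ (hmin ht)
  have hum : deriv u m = 0 := by
    rcases hm.1.eq_or_lt with rfl | ham
    · exact hR.slope_left
    rcases hm.2.eq_or_lt with rfl | hms
    · exact hus
    · exact (hmin.isLocalMin (Icc_mem_nhds ham hms)).deriv_eq_zero
  by_contra! hneg
  have := H.eq_left_of_deriv_eq_zero ha hg ⟨hm.1, hm.2.trans hs.2⟩ (hg0 _ hneg) hum
  linarith

theorem neumannSol (H : CauchySol 2 N a b g u d) (ha : 0 ≤ a) (hab : a ≤ b)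
    (hg : LipschitzWith M g) (hg0 : ∀ s ≤ 0, g s = 0) (hd : 0 < d) (hb : deriv u b = 0) :
    NeumannSol 2 N a b g u :=
  ⟨H.1, H.2.1, fun _ => H.pos_of_deriv_eq_zero ha hg hg0 hd (right_mem_Icc.2 hab) hb, H.2.2.2.1, hb,
    H.2.2.2.2⟩

theorem phase_sub_const_ne_zero (H : CauchySol 2 N a b g u d) (ha : 0 ≤ a)
    (hg : LipschitzWith M g) (hc : g c = 0) (hd : d ≠ c) (ht : t ∈ Icc a b) :
    phase (N - 1) (fun t => u t - c) (deriv u) t ≠ 0 :=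
  ((H.isRadialSol ha hg.continuous).sub_const c).phase_ne_zero M.coe_nonneg
    (fun s _ => abs_comp_le_of_lipschitzWith hg hc u s) (sub_ne_zero.2 (H.left_eq ▸ hd)) ht

theorem exists_shootingAngle_eq (H : CauchySol 2 N a b g u d) (ha : 0 ≤ a) (hab : a ≤ b)
    (hg : LipschitzWith M g) (hc : g c = 0) (hd : d ≠ c) {α : ℝ} (hα : 0 ≤ α)
    (hαb : α ≤ shootingAngle N a c g u b) : ∃ t ∈ Icc a b, shootingAngle N a c g u t = α :=
  intermediate_value_Icc hab
    (((H.isRadialSol ha hg.continuous).sub_const c).continuousOn_angle hab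
      fun _ => H.phase_sub_const_ne_zero ha hg hc hd)
    ⟨by rwa [angle_left], hαb⟩

theorem deriv_eq_zero_of_shootingAngle_eq (H : CauchySol 2 N a b g u d) (ha : 0 ≤ a)
    (hg : LipschitzWith M g) (hc : g c = 0) (hd : d ≠ c) (ht : t ∈ Icc a b) {m : ℕ}
    (hm : shootingAngle N a c g u t = m * π) : deriv u t = 0 := by
  have hR := (H.isRadialSol ha hg.continuous).sub_const c
  rcases ht.1.eq_or_lt with rfl | hat
  · exact hR.slope_left
  · have hflux := (hR.sin_angle_eq_zero_iff (fun _ => H.phase_sub_const_ne_zero ha hg hc hd) ht).1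
      ((congrArg sin hm).trans (sin_nat_mul_pi m))
    exact (mul_eq_zero.1 hflux).resolve_left (pow_pos (ha.trans_lt hat) _).ne'

theorem exists_eq_of_pi_div_two_le_shootingAngle (H : CauchySol 2 N a b g u d) (ha : 0 ≤ a)
    (hab : a ≤ b) (hg : LipschitzWith M g) (hc : g c = 0) (hd : d ≠ c)
    (hb : π / 2 ≤ shootingAngle N a c g u b) : ∃ t ∈ Icc a b, u t = c := by
  obtain ⟨t, ht, hθ⟩ := H.exists_shootingAngle_eq ha hab hg hc hd (by positivity) hb
  have hcos := ((H.isRadialSol ha hg.continuous).sub_const c).cos_angle_eq_zero_iff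
    (fun _ => H.phase_sub_const_ne_zero ha hg hc hd) ht
  exact ⟨t, ht, sub_eq_zero.1 (hcos.1 ((congrArg cos hθ).trans cos_pi_div_two))⟩

theorem shootingAngle_eq_zero (H : CauchySol 2 N a b g u d) (ha : 0 ≤ a)
    (hg : LipschitzWith M g) (hgd : g d = 0) (hab : a ≤ b) : shootingAngle N a c g u b = 0 := by
  refine intervalIntegral.integral_zero_ae (.of_forall fun t ht => ?_)
  rw [uIoc_of_le hab] at ht
  obtain ⟨hut, hut'⟩ := H.eq_and_deriv_eq_zero ha hg hgd (Ioc_subset_Icc_self ht)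
  simp only [angularVelocity, Function.comp_apply, hut, hut', hgd]
  ring

end CauchySol

section Family

variable {N k : ℕ} {a b c d₀ d₁ : ℝ} {M : ℝ≥0} {g : ℝ → ℝ} {u : ℝ → ℝ → ℝ}

theorem continuousOn_shootingAngle (ha : 0 ≤ a) (hab : a ≤ b) (hg : LipschitzWith M g)
    (hc : g c = 0) (hu : ∀ d, CauchySol 2 N a b g (u d) d) :
    ContinuousOn (fun d => shootingAngle N a c g (u d) b) {c}ᶜ := by
  have hR d := (hu d).isRadialSol ha hg.continuous
  set C : ℝ≥0 := ⟨exp ((M + 1) * (b - a)), (exp_pos _).le⟩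
  have hux : ContinuousOn (fun z : ℝ × ℝ => u z.1 z.2) ({c}ᶜ ×ˢ Icc a b) :=
    continuousOn_prod_of_continuousOn_lipschitzOnWith _ C (fun d _ => (hR d).continuousOn)
      fun t ht => LipschitzOnWith.of_dist_le_mul fun d _ e _ => (hu d).abs_sub_le (hu e) ha hg ht
  have hux' : ContinuousOn (fun z : ℝ × ℝ => deriv (u z.1) z.2) ({c}ᶜ ×ˢ Icc a b) :=
    continuousOn_prod_of_continuousOn_lipschitzOnWith _ C (fun d _ => (hR d).continuousOn_slope)
      fun t ht => LipschitzOnWith.of_dist_le_mul fun d _ e _ =>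
        (hu d).abs_deriv_sub_le (hu e) ha hg ht
  have hgx := hg.continuous.comp_continuousOn hux
  have hxc := hux.sub (continuousOn_const (c := c))
  have hpow : ContinuousOn (fun z : ℝ × ℝ => z.2 ^ (N - 1)) ({c}ᶜ ×ˢ Icc a b) := by fun_prop
  have hphase : ContinuousOn (fun z : ℝ × ℝ =>
      phase (N - 1) (fun t => u z.1 t - c) (deriv (u z.1)) z.2) ({c}ᶜ ×ˢ Icc a b) :=
    (Complex.continuous_ofReal.comp_continuousOn hxc).sub
      ((Complex.continuous_ofReal.comp_continuousOn (hpow.mul hux')).mul continuousOn_const)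
  refine continuousOn_parametric_intervalIntegral hab <|
    (hpow.mul ((hgx.mul hxc).add (hux'.pow 2))).div (hphase.norm.pow 2) fun z hz => ?_
  exact pow_ne_zero _ (norm_ne_zero_iff.2 ((hu z.1).phase_sub_const_ne_zero ha hg hc hz.1 hz.2))

theorem eventually_shootingAngle_lt_pi (ha : 0 ≤ a) (hab : a ≤ b) (hg : LipschitzWith M g)
    (hc : g c = 0) (hu : ∀ d, CauchySol 2 N a b g (u d) d) {e : ℝ} (he : g e = 0)
    (hec : e ≠ c) : ∀ᶠ d in 𝓝 e, shootingAngle N a c g (u d) b < π := by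
  have hcont := (continuousOn_shootingAngle ha hab hg hc hu).continuousAt
    (isOpen_compl_singleton.mem_nhds hec)
  refine hcont.eventually (gt_mem_nhds ?_)
  exact ((hu e).shootingAngle_eq_zero ha hg he hab).trans_lt pi_pos

theorem eventually_angle_le_shootingAngle (ha : 0 ≤ a) (hab : a ≤ b) (hg : LipschitzWith M g)
    (hc : g c = 0) (hu : ∀ d, CauchySol 2 N a b g (u d) d) {lam : ℝ}
    (hlin : ∀ᶠ s in 𝓝 c, lam * (s - c) ^ 2 ≤ g s * (s - c)) {w w' : ℝ → ℝ}
    (hw : IsRadialSol (N - 1) a b w w' fun t => lam * w t)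
    (hphase : ∀ t ∈ Icc a b, phase (N - 1) w w' t ≠ 0) :
    ∀ᶠ d in 𝓝[≠] c, angle (N - 1) a w w' (fun t => lam * w t) b ≤
      shootingAngle N a c g (u d) b := by
  obtain ⟨ε, hε, hlin⟩ := Metric.eventually_nhds_iff.1 hlin
  have hnear : ∀ᶠ d in 𝓝 c, exp ((M + 1) * (b - a)) * |d - c| < ε := by
    refine ((by fun_prop : Continuous fun d => exp ((M + 1) * (b - a)) * |d - c|).tendsto
      c).eventually (gt_mem_nhds ?_)
    rwa [sub_self, abs_zero, mul_zero]
  filter_upwards [nhdsWithin_le_nhds hnear, self_mem_nhdsWithin] with d hd hdc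
  refine hw.angle_le_angle (((hu d).isRadialSol ha hg.continuous).sub_const c) hab
    (continuousOn_const (c := lam)) hphase
    (fun t => (hu d).phase_sub_const_ne_zero ha hg hc hdc) (fun t _ => by ring_nf; rfl)
    fun t ht => hlin ?_
  have hdist := (hu d).abs_sub_le (hu c) ha hg ht
  rw [((hu c).eq_and_deriv_eq_zero ha hg hc ht).1] at hdist
  exact hdist.trans_lt hd

theorem exists_fin_forall_eq_mul_pi {Θ : ℝ → ℝ} (hΘ : ContinuousOn Θ (uIcc d₀ d₁))
    (h₀ : Θ d₀ < π) (h₁ : k * π ≤ Θ d₁) :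
    ∃ e : Fin k → ℝ, ∀ j, e j ∈ uIcc d₀ d₁ ∧ Θ (e j) = ((j + 1 : ℕ) : ℝ) * π := by
  refine Classical.skolem.1 fun j => intermediate_value_uIcc hΘ ?_
  refine Icc_subset_uIcc ⟨h₀.le.trans (le_mul_of_one_le_left pi_pos.le ?_),
    le_trans (by gcongr; exact j.2) h₁⟩
  exact_mod_cast Nat.le_add_left 1 j

theorem exists_neumannSol_family (ha : 0 ≤ a) (hab : a < b) (hg : LipschitzWith M g)
    (hc : g c = 0) (hg0 : ∀ s ≤ 0, g s = 0) (hu : ∀ d, CauchySol 2 N a b g (u d) d)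
    (hd : uIcc d₀ d₁ ⊆ Ioi 0 \ {c}) (hd₀ : shootingAngle N a c g (u d₀) b < π)
    (hd₁ : k * π ≤ shootingAngle N a c g (u d₁) b) :
    ∃ v : Fin k → ℝ → ℝ,
      (∀ j, NeumannSol 2 N a b g (v j) ∧ NonConstOn a b (v j) ∧ v j a ∈ uIcc d₀ d₁) ∧
      ∀ i j, i ≠ j → DistinctOn a b (v i) (v j) := by
  obtain ⟨e, he⟩ := exists_fin_forall_eq_mul_pi
    ((continuousOn_shootingAngle ha hab.le hg hc hu).mono fun d h => (hd h).2) hd₀ hd₁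
  have haI := left_mem_Icc.2 hab.le
  have hleft j : u (e j) a = e j := (hu (e j)).left_eq
  refine ⟨fun j => u (e j), fun j => ?_, fun i j hij => ⟨a, haI, fun h => hij ?_⟩⟩
  · obtain ⟨hej, hθ⟩ := he j
    obtain ⟨hpos, hne⟩ : 0 < e j ∧ e j ≠ c := hd hej
    have hb := (hu _).deriv_eq_zero_of_shootingAngle_eq ha hg hc hne (right_mem_Icc.2 hab.le) hθ
    obtain ⟨t, ht, hut⟩ := (hu _).exists_eq_of_pi_div_two_le_shootingAngle ha hab.le hg hc hne
      (by rw [hθ]; push_cast; nlinarith [pi_pos, (j : ℕ).cast_nonneg (α := ℝ)])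
    refine ⟨(hu _).neumannSol ha hab.le hg hg0 hpos hb, ⟨a, haI, t, ht, ?_⟩, ?_⟩ <;>
      simp only [hleft]
    exacts [hut ▸ hne, hej]
  · have hij : e i = e j := (hleft i).symm.trans (h.trans (hleft j))
    have hmul := (he i).2.symm.trans (hij ▸ (he j).2)
    exact Fin.ext (by simpa using mul_right_cancel₀ pi_ne_zero hmul)

end Family

/-! ### Energy and truncation -/

section Potential

variable {g : ℝ → ℝ}

theorem hasDerivAt_Fint (hg : Continuous g) (s : ℝ) : HasDerivAt (Fint g) (g s) s :=
  (hg.integral_hasStrictDerivAt 1 s).hasDerivAt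

theorem continuous_Fint (hg : Continuous g) : Continuous (Fint g) :=
  continuous_iff_continuousAt.2 fun s => (hasDerivAt_Fint hg s).continuousAt

theorem Fint_one (g : ℝ → ℝ) : Fint g 1 = 0 := intervalIntegral.integral_same

theorem strictMonoOn_Fint (hg : Continuous g) (hpos : ∀ s, 1 < s → 0 < g s) :
    StrictMonoOn (Fint g) (Ici 1) := by
  refine strictMonoOn_of_hasDerivWithinAt_pos (convex_Ici 1) (continuous_Fint hg).continuousOn
    (fun s _ => (hasDerivAt_Fint hg s).hasDerivWithinAt) ?_
  rw [interior_Ici]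
  exact hpos

theorem antitoneOn_Fint (hg : Continuous g) (hneg : ∀ s ≤ 1, g s ≤ 0) :
    AntitoneOn (Fint g) (Iic 1) := by
  refine antitoneOn_of_hasDerivWithinAt_nonpos (convex_Iic 1) (continuous_Fint hg).continuousOn
    (fun s _ => (hasDerivAt_Fint hg s).hasDerivWithinAt) ?_
  rw [interior_Iic]
  exact fun s hs => hneg s hs.le

theorem Fint_nonneg (hg : Continuous g) (hpos : ∀ s, 1 < s → 0 < g s)
    (hneg : ∀ s ≤ 1, g s ≤ 0) (s : ℝ) : 0 ≤ Fint g s := by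
  rw [← Fint_one g]
  rcases le_total s 1 with hs | hs
  · exact antitoneOn_Fint hg hneg hs self_mem_Iic hs
  · exact (strictMonoOn_Fint hg hpos).monotoneOn self_mem_Ici hs hs

end Potential

section Truncation

/-- The nonlinearity `f` frozen outside `[0, T]`. Truncation makes a locally Lipschitz `f` globally
Lipschitz, and the solutions of the Neumann problem that are found for the truncation take their
values in `[0, T]`. -/
def trunc (f : ℝ → ℝ) (T s : ℝ) : ℝ := f (max 0 (min s T))

variable {f : ℝ → ℝ} {M : ℝ≥0} {T s : ℝ}

theorem trunc_of_mem (hs : s ∈ Icc 0 T) : trunc f T s = f s := by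
  rw [trunc, min_eq_left hs.2, max_eq_right hs.1]

theorem lipschitzWith_trunc (hT : 0 ≤ T) (hfM : LipschitzOnWith M f (Icc 0 T)) :
    LipschitzWith M (trunc f T) := by
  rw [← lipschitzOnWith_univ, ← mul_one M]
  exact hfM.comp ((LipschitzWith.id.min_const T).const_max 0).lipschitzOnWith
    fun s _ => ⟨le_max_left _ _, max_le hT (min_le_right _ _)⟩

theorem trunc_of_nonpos (hf : Feq f) (hs : s ≤ 0) : trunc f T s = 0 := by
  rw [trunc, max_eq_left ((min_le_left _ _).trans hs), hf.1]

theorem trunc_one (hf : Feq f) (hT : 1 ≤ T) : trunc f T 1 = 0 := by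
  rw [trunc_of_mem ⟨zero_le_one, hT⟩, hf.2.1]

theorem trunc_pos (hf : Feq f) (hT : 1 < T) (hs : 1 < s) : 0 < trunc f T s :=
  hf.2.2.2 _ (lt_max_of_lt_right (lt_min hs hT))

theorem Feq.nonpos (hf : Feq f) (hs : 0 ≤ s) (hs1 : s ≤ 1) : f s ≤ 0 := by
  rcases hs.eq_or_lt with rfl | hs
  · exact hf.1.le
  rcases hs1.eq_or_lt with rfl | hs1
  · exact hf.2.1.le
  · exact (hf.2.2.1 s hs hs1).le

theorem trunc_nonpos (hf : Feq f) (hs : s ≤ 1) : trunc f T s ≤ 0 :=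
  hf.nonpos (le_max_left _ _) (max_le zero_le_one ((min_le_left _ _).trans hs))

theorem Fint_trunc (hT : 1 ≤ T) (hs : s ∈ Icc 0 T) : Fint (trunc f T) s = Fint f s :=
  intervalIntegral.integral_congr fun _ hσ =>
    trunc_of_mem (uIcc_subset_Icc ⟨zero_le_one, hT⟩ hs hσ)

theorem Fint_le_Fint_zero (hf : Feq f) (hT : 1 ≤ T) (hfM : LipschitzOnWith M f (Icc 0 T))
    (hs : s ∈ Icc 0 1) : Fint f s ≤ Fint f 0 := by
  have hg := (lipschitzWith_trunc (zero_le_one.trans hT) hfM).continuous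
  rw [← Fint_trunc hT ⟨hs.1, hs.2.trans hT⟩, ← Fint_trunc hT ⟨le_rfl, zero_le_one.trans hT⟩]
  exact antitoneOn_Fint hg (fun _ => trunc_nonpos hf) (mem_Iic.2 zero_le_one) hs.2 hs.1

theorem Fint_le_Fint_right (hf : Feq f) (hT : 1 < T) (hfM : LipschitzOnWith M f (Icc 0 T))
    (h0T : Fint f 0 ≤ Fint f T) (hs : s ∈ Icc 0 T) : Fint f s ≤ Fint f T := by
  rcases le_total s 1 with hs1 | hs1
  · exact (Fint_le_Fint_zero hf hT.le hfM ⟨hs.1, hs1⟩).trans h0T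
  · have hT0 : 0 ≤ T := hs.1.trans hs.2
    have hg := (lipschitzWith_trunc hT0 hfM).continuous
    rw [← Fint_trunc hT.le hs, ← Fint_trunc hT.le ⟨hT0, le_rfl⟩]
    exact (strictMonoOn_Fint hg fun _ => trunc_pos hf hT).monotoneOn hs1 hT.le hs.2

variable {N : ℕ} {a b d t : ℝ} {u : ℝ → ℝ}

theorem CauchySol.le_of_Fint_le (H : CauchySol 2 N a b (trunc f T) u d) (ha : 0 ≤ a)
    (hf : Feq f) (hT : 1 < T) (hfM : LipschitzOnWith M f (Icc 0 T)) (hd : d ∈ Icc 0 T)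
    (hdT : Fint f d ≤ Fint f T) (ht : t ∈ Icc a b) : u t ≤ T := by
  have hT0 : 0 ≤ T := hd.1.trans hd.2
  have hg := (lipschitzWith_trunc hT0 hfM).continuous
  have henergy := (H.isRadialSol ha hg).antitoneOn_energy (hasDerivAt_Fint hg)
    (left_mem_Icc.2 (ht.1.trans ht.2)) ht ht.1
  simp only [H.left_eq, (H.isRadialSol ha hg).slope_left, Fint_trunc hT.le hd] at henergy
  rw [← Fint_trunc hT.le (right_mem_Icc.2 hT0)] at hdT
  by_contra! htT
  have := strictMonoOn_Fint hg (fun _ => trunc_pos hf hT) hT.le (hT.le.trans htT.le) htT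
  linarith [sq_nonneg (deriv u t)]

theorem CauchySol.exists_turning_point (H : CauchySol 2 N a b (trunc f T) u T) (ha : 0 ≤ a)
    (hab : a ≤ b) (hf : Feq f) (hT : 1 < T) (hfM : LipschitzOnWith M f (Icc 0 T))
    (hπ : π ≤ shootingAngle N a 1 (trunc f T) u b) :
    ∃ s ∈ Ioc a b, deriv u s = 0 ∧ u s < 1 ∧ ∀ t ∈ Icc a s, u t ∈ Ioc 0 T := by
  have hT0 : 0 < T := zero_lt_one.trans hT
  have hg := lipschitzWith_trunc hT0.le hfM
  have hg1 : trunc f T 1 = 0 := trunc_one hf hT.le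
  have hR := (H.isRadialSol ha hg.continuous).sub_const 1
  have hne : ∀ t ∈ Icc a b, _ := fun t => H.phase_sub_const_ne_zero ha hg hg1 hT.ne'
  obtain ⟨s, hs, hθ⟩ := H.exists_shootingAngle_eq ha hab hg hg1 hT.ne' pi_pos.le hπ
  have has : a < s := hs.1.lt_of_ne fun h => by
    rw [← h, shootingAngle, angle_left] at hθ
    exact pi_pos.ne hθ
  have hus' : deriv u s = 0 :=
    H.deriv_eq_zero_of_shootingAngle_eq ha hg hg1 hT.ne' hs (m := 1) (by simpa using hθ)
  refine ⟨s, ⟨has, hs.2⟩, hus', ?_, fun t ht => ⟨?_, ?_⟩⟩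
  · have hpolar := hR.eq_sign_mul_norm_phase_mul_cos hne hs
    rw [show angle _ _ _ _ _ s = π from hθ, cos_pi, H.left_eq, sign_of_pos (sub_pos.2 hT)] at hpolar
    linarith [norm_pos_iff.2 (hne s hs)]
  · exact H.pos_of_deriv_eq_zero ha hg (fun _ => trunc_of_nonpos hf) hT0 hs hus' ht
  · exact H.le_of_Fint_le ha hf hT hfM (right_mem_Icc.2 hT0.le) le_rfl ⟨ht.1, ht.2.trans hs.2⟩

end Truncation

section LargeDatum

section Pohozaev

variable {n : ℕ} {a b : ℝ} {x x' h g G : ℝ → ℝ}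

/-- Pohozaev functional of a radial solution in dimension `n + 1` whose source has potential `G`:
the scaled energy, corrected by the multiple of `t ^ n * x * x'` that cancels the kinetic part of
its derivative. -/
noncomputable def pohozaev (n : ℕ) (G x x' : ℝ → ℝ) (t : ℝ) : ℝ :=
  t ^ (n + 1) * (x' t ^ 2 / 2 + G (x t)) + (n - 1) / 2 * (x t * (t ^ n * x' t))

theorem IsRadialSol.hasDerivAt_pohozaev (H : IsRadialSol n a b x x' (g ∘ x))
    (hG : ∀ s, HasDerivAt G (g s) s) {t : ℝ} (ht : t ∈ Ioo a b) :
    HasDerivAt (pohozaev n G x x')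
      (t ^ n * ((n + 1) * G (x t) - (n - 1) / 2 * (x t * g (x t)))) t := by
  have h0 : t ≠ 0 := (H.pos (Ioo_subset_Ioc_self ht)).ne'
  refine (((hasDerivAt_pow (n + 1) t).fun_mul ((((H.hasDerivAt_slope ht).fun_pow 2).div_const
    2).fun_add ((hG (x t)).comp t (H.hasDerivAt t ht)))).fun_add
    (((H.hasDerivAt t ht).fun_mul (H.hasDerivAt_flux t ht)).const_mul
      (((n : ℝ) - 1) / 2))).congr_deriv ?_
  simp only [Function.comp_apply, Nat.add_sub_cancel, Nat.cast_add, Nat.cast_one, Nat.cast_ofNat,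
    pow_succ]
  field_simp
  ring

theorem IsRadialSol.continuousOn_pohozaev (H : IsRadialSol n a b x x' h) (hG : Continuous G) :
    ContinuousOn (pohozaev n G x x') (Icc a b) :=
  ((continuous_pow _).continuousOn.mul (((H.continuousOn_slope.pow 2).div_const 2).add
    (hG.comp_continuousOn H.continuousOn))).add
    ((H.continuousOn.mul H.continuousOn_flux).const_mul _)

theorem hasDerivAt_mul_pow_div (K : ℝ) (n : ℕ) (t : ℝ) :
    HasDerivAt (fun t => K * (t ^ (n + 1) / (n + 1))) (K * t ^ n) t := by
  refine (((hasDerivAt_pow (n + 1) t).div_const ((n : ℝ) + 1)).const_mul K).congr_deriv ?_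
  push_cast [Nat.add_sub_cancel]
  field_simp

theorem IsRadialSol.mul_pow_sub_pow_le_pohozaev_sub (H : IsRadialSol n a b x x' (g ∘ x))
    (hG : ∀ s, HasDerivAt G (g s) s) {K s t : ℝ} (has : a ≤ s) (hst : s ≤ t) (htb : t ≤ b)
    (hK : ∀ τ ∈ Ioo s t, K ≤ (n + 1) * G (x τ) - (n - 1) / 2 * (x τ * g (x τ))) :
    K * ((t ^ (n + 1) - s ^ (n + 1)) / (n + 1)) ≤
      pohozaev n G x x' t - pohozaev n G x x' s := by
  have hGc : Continuous G := continuous_iff_continuousAt.2 fun s => (hG s).continuousAt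
  have hmono : MonotoneOn (fun τ => pohozaev n G x x' τ - K * (τ ^ (n + 1) / (n + 1)))
      (Icc s t) := by
    refine monotoneOn_Icc_of_hasDerivAt_nonneg
      (((H.continuousOn_pohozaev hGc).mono (Icc_subset_Icc has htb)).sub (by fun_prop))
      (fun τ hτ => (H.hasDerivAt_pohozaev hG
        ⟨has.trans_lt hτ.1, hτ.2.trans_le htb⟩).fun_sub (hasDerivAt_mul_pow_div K n τ))
      fun τ hτ => ?_
    have hτ0 : 0 ≤ τ := (H.left_nonneg.trans has).trans hτ.1.le
    rw [mul_comm K, ← mul_sub]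
    exact mul_nonneg (pow_nonneg hτ0 n) (sub_nonneg.2 (hK τ hτ))
  have := hmono (left_mem_Icc.2 hst) (right_mem_Icc.2 hst) hst
  rw [sub_div, mul_sub]
  linarith

theorem IsRadialSol.pow_mul_add_le (H : IsRadialSol n 0 b x x' (g ∘ x))
    (hG : ∀ s, HasDerivAt G (g s) s) {C K ρ s : ℝ} (hρ : 0 ≤ ρ) (hρs : ρ ≤ s) (hsb : s ≤ b)
    (hK : ∀ t ∈ Ioo 0 ρ, K ≤ (n + 1) * G (x t) - (n - 1) / 2 * (x t * g (x t)))
    (hC : ∀ t ∈ Ioo ρ s, -C ≤ (n + 1) * G (x t) - (n - 1) / 2 * (x t * g (x t)))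
    (hs : x' s = 0) : ρ ^ (n + 1) * (K + C) ≤ s ^ (n + 1) * ((n + 1) * G (x s) + C) := by
  have hstart := H.mul_pow_sub_pow_le_pohozaev_sub hG le_rfl hρ (hρs.trans hsb) hK
  have hend := H.mul_pow_sub_pow_le_pohozaev_sub hG hρ hρs hsb hC
  have hP0 : pohozaev n G x x' 0 = 0 := by simp [pohozaev, H.slope_left]
  have hPs : pohozaev n G x x' s = s ^ (n + 1) * G (x s) := by simp [pohozaev, hs]
  have hn : (0 : ℝ) < n + 1 := by positivity
  rw [hP0, zero_pow n.succ_ne_zero, sub_zero, sub_zero, ← mul_div_assoc, div_le_iff₀ hn] at hstart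
  rw [hPs, ← mul_div_assoc, div_le_iff₀ hn] at hend
  linarith

theorem IsRadialSol.neg_mul_le_slope (H : IsRadialSol n a b x x' h) {B : ℝ} (hB0 : 0 ≤ B)
    (hB : ∀ t ∈ Ioo a b, h t ≤ B) {t : ℝ} (ht : t ∈ Ioo a b) : -(B * t) ≤ x' t := by
  have ht0 : 0 < t := H.pos (Ioo_subset_Ioc_self ht)
  have hmono : MonotoneOn (fun t => t ^ n * x' t + B * (t ^ (n + 1) / (n + 1))) (Icc a b) := by
    refine monotoneOn_Icc_of_hasDerivAt_nonneg (H.continuousOn_flux.add (by fun_prop))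
      (fun s hs => (H.hasDerivAt_flux s hs).fun_add (hasDerivAt_mul_pow_div B n s)) fun s hs => ?_
    have := mul_nonneg (pow_nonneg (H.left_nonneg.trans hs.1.le) n) (sub_nonneg.2 (hB s hs))
    linarith
  have hflux := hmono (left_mem_Icc.2 (ht.1.trans ht.2).le) (Ioo_subset_Icc_self ht) ht.1.le
  simp only [H.slope_left, mul_zero, zero_add] at hflux
  have ha : 0 ≤ B * (a ^ (n + 1) / (n + 1)) := by have := H.left_nonneg; positivity
  have hdiv : B * (t ^ (n + 1) / (n + 1)) ≤ B * t ^ (n + 1) :=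
    mul_le_mul_of_nonneg_left (div_le_self (by positivity) (by simp)) hB0
  have key : 0 ≤ t ^ n * (x' t + B * t) := by
    rw [mul_add, mul_left_comm, ← pow_succ]
    linarith
  linarith [nonneg_of_mul_nonneg_right key (pow_pos ht0 n)]

theorem IsRadialSol.left_sub_le (H : IsRadialSol n a b x x' h) {B : ℝ} (hB0 : 0 ≤ B)
    (hB : ∀ t ∈ Ioo a b, h t ≤ B) {t : ℝ} (ht : t ∈ Icc a b) : x a - B * t ^ 2 / 2 ≤ x t := by
  have hmono : MonotoneOn (fun t => x t + B * t ^ 2 / 2) (Icc a b) := by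
    refine monotoneOn_Icc_of_hasDerivAt_nonneg (f' := fun t => x' t + B * t)
      (H.continuousOn.add (by fun_prop)) (fun s hs => ?_)
      fun s hs => by linarith [H.neg_mul_le_slope hB0 hB hs]
    refine ((H.hasDerivAt s hs).fun_add
      (((hasDerivAt_pow 2 s).const_mul B).div_const 2)).congr_deriv ?_
    push_cast
    ring
  have := hmono (left_mem_Icc.2 (ht.1.trans ht.2)) ht ht.1
  have : 0 ≤ B * a ^ 2 / 2 := by positivity
  linarith

end Pohozaev

variable {n N : ℕ} {a b B C K T ρ : ℝ} {M : ℝ≥0} {f u : ℝ → ℝ}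

theorem CauchySol.shootingAngle_lt_pi_of_pow_mul_Fint_lt (H : CauchySol 2 N a b (trunc f T) u T)
    (ha : 0 ≤ a) (hab : a ≤ b) (hf : Feq f) (hT : 1 < T) (hfM : LipschitzOnWith M f (Icc 0 T))
    (hlarge : b ^ (2 * (N - 1)) * Fint f 0 < a ^ (2 * (N - 1)) * Fint f T) :
    shootingAngle N a 1 (trunc f T) u b < π := by
  by_contra! hπ
  obtain ⟨s, hs, hus', hus, hmem⟩ := H.exists_turning_point ha hab hf hT hfM hπ
  have hsT : u s ∈ Ioc 0 T := hmem s (right_mem_Icc.2 hs.1.le)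
  have hT0 : 0 ≤ T := zero_le_one.trans hT.le
  have hg := (lipschitzWith_trunc hT0 hfM).continuous
  have henergy := (H.isRadialSol ha hg).monotoneOn_pow_mul_energy (hasDerivAt_Fint hg)
    (Fint_nonneg hg (fun _ => trunc_pos hf hT) fun _ => trunc_nonpos hf)
    (left_mem_Icc.2 hab) (Ioc_subset_Icc_self hs) hs.1.le
  simp only [(H.isRadialSol ha hg).slope_left, hus', H.left_eq,
    Fint_trunc hT.le (right_mem_Icc.2 hT0), Fint_trunc hT.le (Ioc_subset_Icc_self hsT), ne_eq,
    OfNat.ofNat_ne_zero, not_false_eq_true, zero_pow, zero_div, zero_add] at henergy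
  have hs0 : 0 ≤ s := ha.trans hs.1.le
  refine hlarge.not_ge ?_
  calc a ^ (2 * (N - 1)) * Fint f T
      ≤ s ^ (2 * (N - 1)) * Fint f (u s) := henergy
    _ ≤ s ^ (2 * (N - 1)) * Fint f 0 := by
        gcongr
        exact Fint_le_Fint_zero hf hT.le hfM ⟨hsT.1.le, hus.le⟩
    _ ≤ b ^ (2 * (N - 1)) * Fint f 0 := by
        have : 0 ≤ Fint f 0 :=
          Fint_one f ▸ Fint_le_Fint_zero hf hT.le hfM ⟨zero_le_one, le_rfl⟩
        gcongr
        exact hs.2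

theorem CauchySol.half_le (H : CauchySol 2 N 0 b (trunc f T) u T)
    (hT : 0 ≤ T) (hfM : LipschitzOnWith M f (Icc 0 T)) (hB0 : 0 ≤ B)
    (hB : ∀ s ∈ Icc 0 T, f s ≤ B) (hρ : B * ρ ^ 2 ≤ T) {t : ℝ} (ht : t ∈ Icc 0 b)
    (htρ : t ≤ ρ) : T / 2 ≤ u t := by
  have hg := (lipschitzWith_trunc hT hfM).continuous
  have := (H.isRadialSol le_rfl hg).left_sub_le hB0
    (fun t _ => hB _ ⟨le_max_left _ _, max_le hT (min_le_right _ _)⟩) ht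
  have : B * t ^ 2 ≤ B * ρ ^ 2 := by gcongr; exact ht.1
  rw [H.left_eq] at *
  linarith

theorem CauchySol.shootingAngle_lt_pi_of_pohozaev
    (H : CauchySol 2 (n + 1) 0 b (trunc f T) u T) (hb : 0 ≤ b) (hf : Feq f) (hT : 2 ≤ T)
    (hfM : LipschitzOnWith M f (Icc 0 T)) (hB0 : 0 ≤ B) (hB : ∀ s ∈ Icc 0 T, f s ≤ B)
    (hρ0 : 0 ≤ ρ) (hρ : B * ρ ^ 2 ≤ T)
    (hC : ∀ s ∈ Icc 0 T, -C ≤ (n + 1) * Fint f s - (n - 1) / 2 * (s * f s))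
    (hK : ∀ s ∈ Icc (T / 2) T, K ≤ (n + 1) * Fint f s - (n - 1) / 2 * (s * f s))
    (hlarge : b ^ (n + 1) * ((n + 1) * Fint f 0 + C) < ρ ^ (n + 1) * (K + C)) :
    shootingAngle (n + 1) 0 1 (trunc f T) u b < π := by
  by_contra! hπ
  have hT0 : 0 ≤ T := zero_le_two.trans hT
  have hT1 : 1 < T := one_lt_two.trans_le hT
  have hg := (lipschitzWith_trunc hT0 hfM).continuous
  have hR : IsRadialSol n 0 b u (deriv u) (trunc f T ∘ u) := H.isRadialSol le_rfl hg
  obtain ⟨s, hs, hus', hus, hmem⟩ := H.exists_turning_point le_rfl hb hf hT1 hfM hπ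
  have hsT : u s ∈ Icc 0 T := Ioc_subset_Icc_self (hmem s (right_mem_Icc.2 hs.1.le))
  have hρs : ρ ≤ s := by
    by_contra! hsρ
    linarith [H.half_le hT0 hfM hB0 hB hρ (Ioc_subset_Icc_self hs) hsρ.le]
  have hFg {τ : ℝ} (hτ : τ ∈ Icc 0 T) : (n + 1) * Fint (trunc f T) τ -
      (n - 1) / 2 * (τ * trunc f T τ) = (n + 1) * Fint f τ - (n - 1) / 2 * (τ * f τ) := by
    rw [Fint_trunc hT1.le hτ, trunc_of_mem hτ]
  have hmem' : ∀ t ∈ Icc 0 s, u t ∈ Icc 0 T := fun t ht => Ioc_subset_Icc_self (hmem t ht)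
  have hpohozaev := hR.pow_mul_add_le (hasDerivAt_Fint hg) hρ0 hρs hs.2
    (fun t ht => by
      have htT := hmem' t ⟨ht.1.le, ht.2.le.trans hρs⟩
      have hhalf := H.half_le hT0 hfM hB0 hB hρ ⟨ht.1.le, ht.2.le.trans (hρs.trans hs.2)⟩ ht.2.le
      exact (hK _ ⟨hhalf, htT.2⟩).trans_eq (hFg htT).symm)
    (fun t ht => by
      have htT := hmem' t ⟨hρ0.trans ht.1.le, ht.2.le⟩
      exact (hC _ htT).trans_eq (hFg htT).symm)
    hus'
  rw [Fint_trunc hT1.le hsT] at hpohozaev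
  have hC0 : 0 ≤ (n + 1) * Fint f 0 + C := by
    simpa only [zero_mul, mul_zero, sub_zero, neg_le_iff_add_nonneg] using
      hC 0 (left_mem_Icc.2 hT0)
  have hs0 : 0 ≤ s := hs.1.le
  refine hlarge.not_ge (hpohozaev.trans ?_)
  calc s ^ (n + 1) * ((n + 1) * Fint f (u s) + C)
      ≤ s ^ (n + 1) * ((n + 1) * Fint f 0 + C) := by
        gcongr
        exact Fint_le_Fint_zero hf hT1.le hfM ⟨hsT.1, hus.le⟩
    _ ≤ b ^ (n + 1) * ((n + 1) * Fint f 0 + C) := by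
        gcongr
        exact hs.2

end LargeDatum

/-! ### Multiplicity by shooting -/

section Multiplicity

variable {N k : ℕ} {a b d₀ d₁ lam T : ℝ} {M : ℝ≥0} {f w w' : ℝ → ℝ} {u : ℝ → ℝ → ℝ}

theorem eventually_mul_sq_le_mul_of_hasDerivAt {c m : ℝ} (hf : HasDerivAt f m c) (hc : f c = 0)
    (hlam : lam < m) : ∀ᶠ s in 𝓝 c, lam * (s - c) ^ 2 ≤ f s * (s - c) := by
  have hslope := (hasDerivAt_iff_tendsto_slope.1 hf).eventually (lt_mem_nhds hlam)
  filter_upwards [eventually_nhdsWithin_iff.1 hslope] with s hs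
  rcases eq_or_ne s c with rfl | hsc
  · simp
  · have hlt := hs hsc
    have hsc' : s - c ≠ 0 := sub_ne_zero.2 hsc
    rw [slope_def_field, hc, sub_zero] at hlt
    calc lam * (s - c) ^ 2 ≤ f s / (s - c) * (s - c) ^ 2 := by gcongr
      _ = f s * (s - c) := by field_simp

theorem exists_neumannSol_family_of_trunc (ha : 0 ≤ a) (hab : a < b) (hf : Feq f) (hT : 1 < T)
    (hfM : LipschitzOnWith M f (Icc 0 T)) (h0T : Fint f 0 ≤ Fint f T)
    (hu : ∀ d, CauchySol 2 N a b (trunc f T) (u d) d) (hd : uIcc d₀ d₁ ⊆ Ioc 0 T \ {1})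
    (hd₀ : shootingAngle N a 1 (trunc f T) (u d₀) b < π)
    (hd₁ : k * π ≤ shootingAngle N a 1 (trunc f T) (u d₁) b) :
    ∃ v : Fin k → ℝ → ℝ,
      (∀ j, NeumannSol 2 N a b f (v j) ∧ NonConstOn a b (v j) ∧ v j a ∈ uIcc d₀ d₁) ∧
      ∀ i j, i ≠ j → DistinctOn a b (v i) (v j) := by
  obtain ⟨v, hv, hdistinct⟩ := exists_neumannSol_family ha hab
    (lipschitzWith_trunc (zero_le_one.trans hT.le) hfM) (trunc_one hf hT.le)
    (fun _ => trunc_of_nonpos hf) hu (hd.trans (sdiff_subset_sdiff_left Ioc_subset_Ioi_self))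
    hd₀ hd₁
  refine ⟨v, fun j => ⟨(hv j).1.congr fun t ht => trunc_of_mem ⟨?_, ?_⟩, (hv j).2⟩, hdistinct⟩
  · exact ((hv j).1.2.2.1 t ht).le
  · have hva : v j a ∈ Icc 0 T := Ioc_subset_Icc_self (hd (hv j).2.2).1
    exact (hv j).1.cauchySol.le_of_Fint_le ha hf hT hfM hva
      (Fint_le_Fint_right hf hT hfM h0T hva) ht

theorem exists_neumannSol_families (ha : 0 ≤ a) (hab : a < b) (hf : Feq f) (hT : 1 < T)
    (hfM : LipschitzOnWith M f (Icc 0 T)) (h0T : Fint f 0 ≤ Fint f T)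
    (hlarge : ∀ u, CauchySol 2 N a b (trunc f T) u T →
      shootingAngle N a 1 (trunc f T) u b < π)
    (hlin : ∀ᶠ s in 𝓝 1, lam * (s - 1) ^ 2 ≤ f s * (s - 1))
    (hw : IsRadialSol (N - 1) a b w w' fun t => lam * w t)
    (hphase : ∀ t ∈ Icc a b, phase (N - 1) w w' t ≠ 0)
    (hk : k * π ≤ angle (N - 1) a w w' (fun t => lam * w t) b) :
    (∃ v : Fin k → ℝ → ℝ,
      (∀ j, NeumannSol 2 N a b f (v j) ∧ NonConstOn a b (v j) ∧ 1 < v j a) ∧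
      ∀ i j, i ≠ j → DistinctOn a b (v i) (v j)) ∧
    ∃ v : Fin k → ℝ → ℝ,
      (∀ j, NeumannSol 2 N a b f (v j) ∧ NonConstOn a b (v j) ∧ v j a < 1) ∧
      ∀ i j, i ≠ j → DistinctOn a b (v i) (v j) := by
  have hT0 : 0 ≤ T := zero_le_one.trans hT.le
  have hg := lipschitzWith_trunc hT0 hfM
  have hg1 : trunc f T 1 = 0 := trunc_one hf hT.le
  choose u hu using exists_cauchySol N ha hab.le hg
  have hlin' : ∀ᶠ s in 𝓝 1, lam * (s - 1) ^ 2 ≤ trunc f T s * (s - 1) := by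
    filter_upwards [hlin, Icc_mem_nhds zero_lt_one hT] with s hs hsT
    rwa [trunc_of_mem hsT]
  have hnear : ∀ᶠ d in 𝓝[≠] 1, k * π ≤ shootingAngle N a 1 (trunc f T) (u d) b :=
    (eventually_angle_le_shootingAngle ha hab.le hg hg1 hu hlin' hw hphase).mono
      fun _ => hk.trans
  have hzero : ∀ᶠ d in 𝓝 0, shootingAngle N a 1 (trunc f T) (u d) b < π :=
    eventually_shootingAngle_lt_pi ha hab.le hg hg1 hu (trunc_of_nonpos hf le_rfl) zero_ne_one
  constructor
  · obtain ⟨d, hd, hd1, hdT⟩ :=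
      ((hnear.filter_mono (nhdsGT_le_nhdsNE 1)).and (Ioo_mem_nhdsGT hT)).exists
    have hsub : uIcc T d ⊆ Ioc 1 T := ordConnected_Ioc.uIcc_subset ⟨hT, le_rfl⟩ ⟨hd1, hdT.le⟩
    obtain ⟨v, hv, hdistinct⟩ := exists_neumannSol_family_of_trunc ha hab hf hT hfM h0T hu
      (fun e he => ⟨Ioc_subset_Ioc_left zero_le_one (hsub he), (hsub he).1.ne'⟩)
      (hlarge _ (hu T)) hd
    exact ⟨v, fun j => (hv j).imp_right (And.imp_right fun hj => (hsub hj).1), hdistinct⟩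
  · obtain ⟨d, hd, hd0, hd1⟩ :=
      ((hnear.filter_mono (nhdsLT_le_nhdsNE 1)).and (Ioo_mem_nhdsLT zero_lt_one)).exists
    obtain ⟨e, he, he0, hed⟩ :=
      ((hzero.filter_mono nhdsWithin_le_nhds).and (Ioo_mem_nhdsGT hd0)).exists
    have hsub : uIcc e d ⊆ Ioo 0 1 := ordConnected_Ioo.uIcc_subset ⟨he0, hed.trans hd1⟩ ⟨hd0, hd1⟩
    obtain ⟨v, hv, hdistinct⟩ := exists_neumannSol_family_of_trunc ha hab hf hT hfM h0T hu
      (fun e he => ⟨⟨(hsub he).1, ((hsub he).2.trans hT).le⟩, (hsub he).2.ne⟩) he hd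
    exact ⟨v, fun j => (hv j).imp_right (And.imp_right fun hj => (hsub hj).2), hdistinct⟩

end Multiplicity

/-! ### Differences of powers -/

section Powers

variable {q r : ℝ}

theorem tendsto_mul_rpow_sub_mul_rpow_atTop {β γ : ℝ} (hβ : 0 < β) (hr : 0 < r) (hrq : r < q) :
    Tendsto (fun s : ℝ => β * s ^ q - γ * s ^ r) atTop atTop := by
  have hfactor : Tendsto (fun s : ℝ => s ^ r * (β * s ^ (q - r) - γ)) atTop atTop :=
    (tendsto_rpow_atTop hr).atTop_mul_atTop₀ <| tendsto_atTop_add_const_right _ (-γ)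
      ((tendsto_rpow_atTop (sub_pos.2 hrq)).const_mul_atTop hβ)
  refine hfactor.congr' ?_
  filter_upwards [eventually_gt_atTop 0] with s hs
  rw [rpow_sub hs]
  field_simp

theorem exists_forall_mul_rpow_le_mul_rpow_add {β : ℝ} (hβ : 0 < β) (γ : ℝ) (hr : 0 < r)
    (hrq : r < q) : ∃ C : ℝ, ∀ s, 0 ≤ s → γ * s ^ r ≤ β * s ^ q + C := by
  have hcont : Continuous fun s : ℝ => β * s ^ q - γ * s ^ r :=
    ((continuous_rpow_const (hr.trans hrq).le).const_mul β).sub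
      ((continuous_rpow_const hr.le).const_mul γ)
  obtain ⟨S, hS⟩ := eventually_atTop.1
    ((tendsto_mul_rpow_sub_mul_rpow_atTop (γ := γ) hβ hr hrq).eventually_ge_atTop 0)
  obtain ⟨m, hm⟩ := isCompact_Icc.bddBelow_image (hcont.continuousOn (s := Icc 0 S))
  refine ⟨-min m 0, fun s hs => ?_⟩
  rcases le_total s S with hsS | hsS
  · linarith [hm (mem_image_of_mem _ ⟨hs, hsS⟩), min_le_left m 0]
  · linarith [hS s hsS, min_le_right m 0]

/-- The nonlinearity `f(s) = s^{q-1} - s^{r-1}`, the model example of `Feq`. -/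
noncomputable def powDiff (q r s : ℝ) : ℝ := s ^ (q - 1) - s ^ (r - 1)

theorem feq_powDiff (hr : 1 < r) (hrq : r < q) : Feq (powDiff q r) := by
  refine ⟨?_, by simp [powDiff], fun s hs0 hs1 => ?_, fun s hs => ?_⟩
  · rw [powDiff, zero_rpow (by linarith), zero_rpow (by linarith), sub_zero]
  · exact sub_neg.2 (rpow_lt_rpow_of_exponent_gt hs0 hs1 (by linarith))
  · exact sub_pos.2 (rpow_lt_rpow_of_exponent_lt hs (by linarith))

theorem contDiff_powDiff (hr : 2 ≤ r) (hrq : r < q) : ContDiff ℝ 1 (powDiff q r) := by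
  have hpow {p : ℝ} (hp : 2 ≤ p) : ContDiff ℝ (1 : ℕ) fun s : ℝ => s ^ (p - 1) :=
    contDiff_rpow_const_of_le (by rw [Nat.cast_one]; linarith)
  exact_mod_cast (hpow (hr.trans hrq.le)).sub (hpow hr)

theorem exists_lipschitzOnWith_powDiff (hr : 2 ≤ r) (hrq : r < q) (T : ℝ) :
    ∃ M : ℝ≥0, LipschitzOnWith M (powDiff q r) (Icc 0 T) :=
  LocallyLipschitzOn.exists_lipschitzOnWith_of_compact isCompact_Icc
    (contDiff_powDiff hr hrq).locallyLipschitz.locallyLipschitzOn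

theorem hasDerivAt_powDiff_one (q r : ℝ) : HasDerivAt (powDiff q r) (q - r) 1 := by
  have hpow (p : ℝ) : HasDerivAt (fun s : ℝ => s ^ (p - 1)) (p - 1) 1 := by
    simpa using hasDerivAt_rpow_const (x := 1) (p := p - 1) (.inl one_ne_zero)
  exact ((hpow q).fun_sub (hpow r)).congr_deriv (by ring)

theorem Fint_powDiff (hr : 0 < r) (hrq : r < q) (s : ℝ) :
    Fint (powDiff q r) s = s ^ q / q - s ^ r / r + (1 / r - 1 / q) := by
  have hint {p : ℝ} (hp : 0 < p) : ∫ σ in (1 : ℝ)..s, σ ^ (p - 1) = s ^ p / p - 1 / p := by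
    rw [integral_rpow (.inl (by linarith)), sub_add_cancel, one_rpow, sub_div]
  simp only [Fint, powDiff]
  rw [intervalIntegral.integral_sub (intervalIntegral.intervalIntegrable_rpow' (by linarith))
    (intervalIntegral.intervalIntegrable_rpow' (by linarith)), hint (hr.trans hrq), hint hr]
  ring

theorem tendsto_Fint_powDiff_atTop (hr : 0 < r) (hrq : r < q) :
    Tendsto (Fint (powDiff q r)) atTop atTop := by
  refine (tendsto_atTop_add_const_right _ (1 / r - 1 / q)
    (tendsto_mul_rpow_sub_mul_rpow_atTop (γ := 1 / r) (one_div_pos.2 (hr.trans hrq))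
      hr hrq)).congr fun s => ?_
  rw [Fint_powDiff hr hrq]
  ring

theorem exists_forall_le_pohozaev_powDiff (n : ℕ) (hr : 0 < r) (hrq : r < q)
    (hsub : 0 < ((n : ℝ) + 1) / q - (n - 1) / 2) :
    ∃ C, ∀ s, 0 ≤ s → (((n : ℝ) + 1) / q - (n - 1) / 2) / 2 * s ^ q - C ≤
      (n + 1) * Fint (powDiff q r) s - (n - 1) / 2 * (s * powDiff q r s) := by
  obtain ⟨C, hC⟩ := exists_forall_mul_rpow_le_mul_rpow_add (half_pos hsub)
    ((n + 1) / r - (n - 1) / 2) hr hrq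
  refine ⟨C, fun s hs => ?_⟩
  have hmul {p : ℝ} (hp : 0 < p) : s * s ^ (p - 1) = s ^ p := by
    rw [← rpow_one_add' hs (by linarith), add_sub_cancel]
  have hconst : 0 ≤ ((n : ℝ) + 1) * (1 / r - 1 / q) :=
    mul_nonneg (by positivity) (sub_nonneg.2 (one_div_le_one_div_of_le hr hrq.le))
  rw [Fint_powDiff hr hrq, powDiff, mul_sub s, hmul (hr.trans hrq), hmul hr]
  linear_combination hC s hs + hconst

theorem tendsto_rpow_mul_rpow_half_rpow_atTop (n : ℕ) (hq : 0 < q)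
    (hsub : 0 < ((n : ℝ) + 1) / q - (n - 1) / 2) :
    Tendsto (fun T : ℝ => (T ^ (1 - q / 2)) ^ (n + 1) * (T / 2) ^ q) atTop atTop := by
  refine ((tendsto_rpow_atTop (mul_pos hq hsub)).const_mul_atTop
    (by positivity : (0 : ℝ) < 1 / 2 ^ q)).congr' ?_
  filter_upwards [eventually_gt_atTop 0] with T hT
  rw [div_rpow hT.le zero_le_two, ← rpow_mul_natCast hT.le, ← mul_div_assoc, ← rpow_add hT,
    one_div_mul_eq_div]
  congr 2
  push_cast
  field_simp
  ring

variable {a b : ℝ} {n N : ℕ}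

theorem eventually_shootingAngle_powDiff_lt_pi_of_pos (N : ℕ) (ha : 0 < a) (hab : a ≤ b)
    (hr : 2 ≤ r) (hrq : r < q) :
    ∀ᶠ T in atTop, ∀ u, CauchySol 2 N a b (trunc (powDiff q r) T) u T →
      shootingAngle N a 1 (trunc (powDiff q r) T) u b < π := by
  have hlarge := ((tendsto_Fint_powDiff_atTop (by linarith) hrq).const_mul_atTop
    (pow_pos ha (2 * (N - 1)))).eventually_gt_atTop (b ^ (2 * (N - 1)) * Fint (powDiff q r) 0)
  filter_upwards [hlarge, eventually_gt_atTop 1] with T hT hT1 u H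
  obtain ⟨M, hM⟩ := exists_lipschitzOnWith_powDiff hr hrq T
  exact H.shootingAngle_lt_pi_of_pow_mul_Fint_lt ha.le hab (feq_powDiff (by linarith) hrq) hT1 hM hT

theorem eventually_shootingAngle_powDiff_lt_pi_of_subcritical (hb : 0 ≤ b) (hr : 2 ≤ r)
    (hrq : r < q) (hsub : 0 < ((n : ℝ) + 1) / q - (n - 1) / 2) :
    ∀ᶠ T in atTop, ∀ u, CauchySol 2 (n + 1) 0 b (trunc (powDiff q r) T) u T →
      shootingAngle (n + 1) 0 1 (trunc (powDiff q r) T) u b < π := by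
  obtain ⟨C, hC⟩ := exists_forall_le_pohozaev_powDiff n (by linarith) hrq hsub
  have hlarge := ((tendsto_rpow_mul_rpow_half_rpow_atTop n (by linarith) hsub).const_mul_atTop
    (half_pos hsub)).eventually_gt_atTop (b ^ (n + 1) * ((n + 1) * Fint (powDiff q r) 0 + C))
  filter_upwards [hlarge, eventually_ge_atTop 2] with T hT hT2 u H
  have hT0 : 0 < T := by linarith
  obtain ⟨M, hM⟩ := exists_lipschitzOnWith_powDiff hr hrq T
  -- On `[0, T]` the nonlinearity is at most `B = T ^ (q - 1)`, and `ρ` solves `B * ρ ^ 2 = T`, so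
  -- that `u ≥ T / 2` up to the radius `ρ`; subcriticality makes `ρ ^ (n + 1) * (T / 2) ^ q`
  -- unbounded.
  have hρ : T ^ (q - 1) * (T ^ (1 - q / 2)) ^ 2 = T := by
    rw [← rpow_mul_natCast hT0.le, ← rpow_add hT0]
    ring_nf
    exact rpow_one T
  refine H.shootingAngle_lt_pi_of_pohozaev (B := T ^ (q - 1)) (ρ := T ^ (1 - q / 2))
    (C := C) (K := (((n : ℝ) + 1) / q - (n - 1) / 2) / 2 * (T / 2) ^ q - C) hb
    (feq_powDiff (by linarith) hrq) hT2 hM (by positivity) (fun s hs => ?_) (by positivity)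
    hρ.le (fun s hs => ?_) (fun s hs => ?_) (by linarith)
  · calc powDiff q r s ≤ s ^ (q - 1) := sub_le_self _ (rpow_nonneg hs.1 _)
      _ ≤ T ^ (q - 1) := rpow_le_rpow hs.1 hs.2 (by linarith)
  · linarith [hC s hs.1, mul_nonneg (half_pos hsub).le (rpow_nonneg hs.1 q)]
  · have hs0 : 0 ≤ s := (half_pos hT0).le.trans hs.1
    refine le_trans ?_ (hC s hs0)
    gcongr
    · linarith
    · exact hs.1

theorem sub_half_pos_of_lt_criticalExponent (hq : 2 < q)
    (hsub : 3 ≤ N → q < 2 * (N : ℝ) / ((N : ℝ) - 2)) : 0 < (N : ℝ) / q - (N - 2) / 2 := by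
  rw [sub_pos, div_lt_div_iff₀ two_pos (by linarith)]
  rcases lt_or_ge N 3 with hN | hN
  · have hN2 : (N : ℝ) ≤ 2 := by exact_mod_cast Nat.le_of_lt_succ hN
    nlinarith
  · have hN3 : (3 : ℝ) ≤ N := by exact_mod_cast hN
    have hlt := hsub hN
    rw [lt_div_iff₀ (by linarith)] at hlt
    linarith

theorem eventually_shootingAngle_powDiff_lt_pi (hN : 1 ≤ N) (ha : 0 ≤ a) (hab : a ≤ b)
    (hr : 2 ≤ r) (hrq : r < q) (hsub : a = 0 → 3 ≤ N → q < 2 * (N : ℝ) / ((N : ℝ) - 2)) :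
    ∀ᶠ T in atTop, ∀ u, CauchySol 2 N a b (trunc (powDiff q r) T) u T →
      shootingAngle N a 1 (trunc (powDiff q r) T) u b < π := by
  rcases ha.eq_or_lt with rfl | ha
  · obtain ⟨n, rfl⟩ := Nat.exists_eq_add_of_le' hN
    refine eventually_shootingAngle_powDiff_lt_pi_of_subcritical hab hr hrq
      ((sub_half_pos_of_lt_criticalExponent (by linarith) (hsub rfl)).trans_eq ?_)
    push_cast
    ring
  · exact eventually_shootingAngle_powDiff_lt_pi_of_pos N ha hab hr hrq

end Powers

theorem IsRadialSol.phase_ne_zero_of_eigenfunction {n : ℕ} {a b lam : ℝ} {w w' : ℝ → ℝ}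
    (H : IsRadialSol n a b w w' fun t => lam * w t) (hw : ∃ t ∈ Icc a b, w t ≠ 0) :
    ∀ t ∈ Icc a b, phase n w w' t ≠ 0 := by
  have hsource : ∀ t ∈ Ioo a b, |lam * w t| ≤ |lam| * |w t| := fun t _ => (abs_mul _ _).le
  obtain ⟨t, ht, hwt⟩ := hw
  exact fun s hs => H.phase_ne_zero (abs_nonneg lam) hsource
    (fun ha => hwt (H.eq_zero_of_left_eq_zero (abs_nonneg lam) hsource ha ht).1) hs

theorem stmt4 (N : ℕ) (hN : 1 ≤ N)
    (R1 R2 : ℝ) (hR1 : 0 ≤ R1) (hR12 : R1 < R2)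
    (q r : ℝ) (hr2 : 2 ≤ r) (hrq : r < q)
    (hsub : R1 = 0 → 3 ≤ N → q < 2 * (N : ℝ) / ((N : ℝ) - 2))
    (k : ℕ) (hk : 1 ≤ k)
    (lam : ℝ) (hlam0 : 0 ≤ lam) (hlam : lam < q - r)
    (w : ℝ → ℝ)
    (hw_nonzero : ∃ x ∈ Icc R1 R2, w x ≠ 0)
    (hw_diff : ∀ x ∈ Icc R1 R2, DifferentiableAt ℝ w x)
    (hw_cont : ContinuousOn (deriv w) (Icc R1 R2))
    (hw_bc1 : deriv w R1 = 0) (hw_bc2 : deriv w R2 = 0)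
    (hw_vcont : ContinuousOn (fun x => x ^ (N - 1) * deriv w x) (Icc R1 R2))
    (hw_ode : ∀ x ∈ Ioc R1 R2,
      HasDerivAt (fun t => t ^ (N - 1) * deriv w t) (-(lam * x ^ (N - 1) * w x)) x)
    (hw_zeros : {x ∈ Ioo R1 R2 | w x = 0}.encard = (k : ℕ∞)) :
    (∃ u : Fin k → ℝ → ℝ,
      (∀ j, NeumannSol 2 N R1 R2 (fun s => s ^ (q - 1) - s ^ (r - 1)) (u j)) ∧
      (∀ j, NonConstOn R1 R2 (u j)) ∧
      (∀ i j, i ≠ j → DistinctOn R1 R2 (u i) (u j)) ∧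
      (∀ j, 1 < u j R1)) ∧
    (∃ u : Fin k → ℝ → ℝ,
      (∀ j, NeumannSol 2 N R1 R2 (fun s => s ^ (q - 1) - s ^ (r - 1)) (u j)) ∧
      (∀ j, NonConstOn R1 R2 (u j)) ∧
      (∀ i j, i ≠ j → DistinctOn R1 R2 (u i) (u j)) ∧
      (∀ j, u j R1 < 1)) := by
  have hw : IsRadialSol (N - 1) R1 R2 w (deriv w) fun t => lam * w t :=
    .of_deriv hR1 hw_diff hw_cont
      (fun t ht => ((hw_diff t ht).continuousAt.const_mul lam).continuousWithinAt) hw_bc1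
      fun t ht => (hw_ode t ht).congr_deriv (by ring)
  have hphase := hw.phase_ne_zero_of_eigenfunction hw_nonzero
  have hangle := hw.nat_mul_pi_le_angle hR12.le hphase
    (fun t _ => by nlinarith [mul_self_nonneg (w t)]) hw_bc2 hw_zeros
  have hr0 : 0 < r := by linarith
  have hf : Feq (powDiff q r) := feq_powDiff (by linarith) hrq
  obtain ⟨T, ⟨hlarge, hT1⟩, hT⟩ :=
    ((eventually_shootingAngle_powDiff_lt_pi hN hR1 hR12.le hr2 hrq hsub).and
      (eventually_gt_atTop 1)).and ((tendsto_Fint_powDiff_atTop hr0 hrq).eventually_ge_atTop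
        (Fint (powDiff q r) 0)) |>.exists
  obtain ⟨M, hM⟩ := exists_lipschitzOnWith_powDiff hr2 hrq T
  have hlin := eventually_mul_sq_le_mul_of_hasDerivAt (hasDerivAt_powDiff_one q r) hf.2.1 hlam
  obtain ⟨⟨u, hu, hudist⟩, v, hv, hvdist⟩ :=
    exists_neumannSol_families hR1 hR12 hf hT1 hM hT hlarge hlin hw hphase hangle
  exact ⟨⟨u, fun j => (hu j).1, fun j => (hu j).2.1, hudist, fun j => (hu j).2.2⟩,
    v, fun j => (hv j).1, fun j => (hv j).2.1, hvdist, fun j => (hv j).2.2⟩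
end

section
/- Assume f satisfies (f_reg), (f_eq), (f_0) and (f_subl), and let R1 = 0. Then for every M > 0 there exists D > 0 such that for every d ≥ D, every solution u of the Cauchy problem with datum d on [0,R2], and every r ∈ [0, r1], one has u(r) + |u'(r)| ≥ M. -/
open Real Set Filter Topology

/-!
Since `|f̂ s| ≤ C |s| ^ (p - 1)`, all terms of the equation are controlled by `(p - 1)`-homogeneous
ones, and therefore `|u| + |u'|` is bounded below by a multiple of `|d|`. Near the initial radius,
where the first-order system for `u` and `v = r ^ (N - 1) φ_p(u')` may be singular, integrating the
equation bounds the variation of `u` by a small multiple of `max |u|`, so `|u|` stays above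
`|d| / 2` on an interval whose length does not depend on `d`. Away from it, Young's inequality gives
`|E'| ≤ K E` for `E = |u| ^ p + |v| ^ p'`, hence `E` decays at most exponentially.
-/

section Growth

open Asymptotics

lemma isBigO_principal_Ioi {α E F : Type*} [LinearOrder α] [TopologicalSpace α] [OrderTopology α]
    [CompactIccSpace α] [NoMaxOrder α] [SeminormedAddCommGroup E] [NormedAddCommGroup F]
    {f : α → E} {h : α → F} {a : α} (hf : ContinuousOn f (Ioi a)) (hh : ContinuousOn h (Ioi a))
    (hh0 : ∀ s ∈ Ioi a, h s ≠ 0) (hleft : f =O[𝓝[>] a] h) (htop : f =O[atTop] h) :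
    f =O[𝓟 (Ioi a)] h := by
  have : Nonempty α := ⟨a⟩
  obtain ⟨c₁, hc₁⟩ := hleft.bound
  obtain ⟨b, hab, hb⟩ := mem_nhdsGT_iff_exists_Ioo_subset.1 hc₁
  obtain ⟨c₂, hc₂⟩ := htop.bound
  obtain ⟨A, hA⟩ := eventually_atTop.1 hc₂
  have hsub : Icc b A ⊆ Ioi a := fun s hs => lt_of_lt_of_le hab hs.1
  have hmid : f =O[𝓟 (Icc b A)] h :=
    ((hf.mono hsub).isBigO_principal isCompact_Icc (c := (1 : ℝ)) (by simp)).trans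
      ((hh.mono hsub).isBigO_rev_principal isCompact_Icc (fun s hs => hh0 s (hsub hs)) 1)
  have hcover : Ioi a ⊆ Ioo a b ∪ (Icc b A ∪ Ici A) := by
    intro s hs
    rcases lt_or_ge s b with hsb | hsb
    · exact .inl ⟨hs, hsb⟩
    · exact .inr ((le_total s A).imp (fun hsA => ⟨hsb, hsA⟩) id)
  refine IsBigO.mono ?_ (principal_mono.2 hcover)
  simp only [← sup_principal]
  exact (isBigO_principal.2 ⟨c₁, fun _ hs => hb hs⟩).sup
    (hmid.sup (isBigO_principal.2 ⟨c₂, hA⟩))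

lemma Fzero.isBigO_nhdsGT {p : ℝ} {f : ℝ → ℝ} (h0 : Fzero p f)
    (hneg : ∀ᶠ s in 𝓝[>] 0, f s ≤ 0) : f =O[𝓝[>] 0] fun s => s ^ (p - 1) := by
  obtain ⟨c, hc⟩ := h0
  refine IsBigO.of_bound (-c) ?_
  filter_upwards [hc, hneg, self_mem_nhdsWithin] with s hcs hfs hs
  have hsp : 0 < s ^ (p - 1) := rpow_pos_of_pos hs _
  rw [le_div_iff₀ hsp] at hcs
  rw [norm_of_nonneg hsp.le, norm_of_nonpos hfs]
  linarith

lemma Fsubl.isBigO_atTop {p : ℝ} {f : ℝ → ℝ} (hsubl : Fsubl p f)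
    (hpos : ∀ᶠ s in atTop, 0 ≤ f s) : f =O[atTop] fun s => s ^ (p - 1) := by
  obtain ⟨M, -, hM⟩ := hsubl
  refine IsBigO.of_bound (M + 1) ?_
  filter_upwards [hM 1 one_pos, hpos, eventually_gt_atTop 0] with s hMs hfs hs
  have hsp : 0 < s ^ (p - 1) := rpow_pos_of_pos hs _
  rwa [norm_of_nonneg hsp.le, norm_of_nonneg hfs, ← div_le_iff₀ hsp]

lemma exists_abs_fhat_le_mul_rpow {p : ℝ} {f : ℝ → ℝ} (hcont : ContinuousOn f (Ioi 0))
    (heq : Feq f) (h0 : Fzero p f) (hsubl : Fsubl p f) :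
    ∃ C : ℝ, ∀ s, |fhat f s| ≤ C * |s| ^ (p - 1) := by
  obtain ⟨hf0, -, hneg, hpos⟩ := heq
  have hzero : f =O[𝓝[>] 0] fun s => s ^ (p - 1) := h0.isBigO_nhdsGT <| by
    filter_upwards [Ioo_mem_nhdsGT one_pos] with s hs using (hneg s hs.1 hs.2).le
  have htop : f =O[atTop] fun s => s ^ (p - 1) := hsubl.isBigO_atTop <| by
    filter_upwards [eventually_gt_atTop 1] with s hs using (hpos s hs).le
  obtain ⟨C, hC, hfC⟩ := (isBigO_principal_Ioi hcont
    (h := fun s => s ^ (p - 1)) (continuousOn_id.rpow_const fun s hs => .inl (ne_of_gt hs))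
    (fun s hs => (rpow_pos_of_pos hs _).ne') hzero htop).exists_nonneg
  refine ⟨C, fun s => ?_⟩
  rcases lt_trichotomy s 0 with hs | rfl | hs
  · rw [fhat, if_neg hs.not_ge, abs_zero]
    positivity
  · rw [fhat, if_pos le_rfl, hf0, abs_zero]
    positivity
  · have hfs := isBigOWith_principal.1 hfC s hs
    rw [norm_of_nonneg (rpow_nonneg hs.le _), norm_eq_abs] at hfs
    rwa [fhat, if_pos hs.le, abs_of_pos hs]

end Growth

section Phip

variable {p q : ℝ}

lemma abs_phip (hp : p ≠ 1) (s : ℝ) : |phip p s| = |s| ^ (p - 1) := by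
  rcases eq_or_ne s 0 with rfl | hs
  · simp [phip, zero_rpow (sub_ne_zero.2 hp)]
  · rw [phip, abs_mul, abs_of_nonneg (by positivity), ← rpow_add_one (abs_ne_zero.2 hs)]
    ring_nf

lemma abs_phip_rpow_conj (hpq : p.HolderConjugate q) (s : ℝ) : |phip p s| ^ q = |s| ^ p := by
  rw [abs_phip hpq.lt.ne', ← rpow_mul (abs_nonneg s), hpq.sub_one_mul_conj]

lemma abs_phip_rpow_conj_sub_one (hpq : p.HolderConjugate q) (s : ℝ) :
    |phip p s| ^ (q - 1) = |s| := by
  have hinv : (p - 1) * (q - 1) = 1 := by linarith [hpq.sub_one_mul_conj]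
  rw [abs_phip hpq.lt.ne', ← rpow_mul (abs_nonneg s), hinv, rpow_one]

lemma hasDerivAt_abs_rpow_comp {w : ℝ → ℝ} {w' x : ℝ} (hp : 1 < p) (hw : HasDerivAt w w' x) :
    HasDerivAt (fun t => |w t| ^ p) (p * phip p (w x) * w') x :=
  ((hasDerivAt_abs_rpow (w x) hp).comp x hw).congr_deriv (by rw [phip, mul_assoc p])

end Phip

section Gronwall

lemma le_mul_exp_of_neg_mul_le_deriv {E E' : ℝ → ℝ} {a b K : ℝ}
    (hE : ∀ x ∈ Icc a b, HasDerivAt E (E' x) x) (hK : ∀ x ∈ Icc a b, -(K * E x) ≤ E' x)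
    {x : ℝ} (hx : x ∈ Icc a b) : E a ≤ E x * exp (K * (x - a)) := by
  have hderiv : ∀ y ∈ Icc a b, HasDerivAt (fun y => E y * exp (K * (y - a)))
      ((E' y + K * E y) * exp (K * (y - a))) y := fun y hy =>
    ((hE y hy).mul ((((hasDerivAt_id' y).sub_const a).const_mul K).exp)).congr_deriv (by ring)
  have hmono : MonotoneOn (fun y => E y * exp (K * (y - a))) (Icc a b) := by
    refine monotoneOn_of_hasDerivWithinAt_nonneg (convex_Icc a b)
      (fun y hy => (hderiv y hy).continuousAt.continuousWithinAt)
      (fun y hy => (hderiv y (interior_subset hy)).hasDerivWithinAt) fun y hy => ?_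
    exact mul_nonneg (by linarith [hK y (interior_subset hy)]) (exp_pos _).le
  simpa using hmono ⟨le_rfl, hx.1.trans hx.2⟩ hx hx.1

variable {p q : ℝ}

lemma rpow_sub_one_mul_rpow_sub_one_le {a b : ℝ} (hpq : p.HolderConjugate q) (ha : 0 ≤ a)
    (hb : 0 ≤ b) : a ^ (p - 1) * b ^ (q - 1) ≤ a ^ p + b ^ q := by
  calc a ^ (p - 1) * b ^ (q - 1)
      ≤ (a ^ (p - 1)) ^ q / q + (b ^ (q - 1)) ^ p / p :=
        young_inequality_of_nonneg (rpow_nonneg ha _) (rpow_nonneg hb _) hpq.symm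
    _ = a ^ p / q + b ^ q / p := by
        rw [← rpow_mul ha, ← rpow_mul hb, hpq.sub_one_mul_conj, hpq.symm.sub_one_mul_conj]
    _ ≤ a ^ p + b ^ q := add_le_add (div_le_self (rpow_nonneg ha _) hpq.symm.lt.le)
        (div_le_self (rpow_nonneg hb _) hpq.lt.le)

lemma abs_phip_mul_add_phip_mul_le {a b a' b' A B : ℝ} (hpq : p.HolderConjugate q)
    (hA : 0 ≤ A) (hB : 0 ≤ B) (ha' : |a'| ≤ A * |b| ^ (q - 1))
    (hb' : |b'| ≤ B * |a| ^ (p - 1)) :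
    |p * phip p a * a' + q * phip q b * b'| ≤ (p * A + q * B) * (|a| ^ p + |b| ^ q) := by
  have hp := hpq.nonneg
  have hq := hpq.symm.nonneg
  calc |p * phip p a * a' + q * phip q b * b'|
      ≤ |p * phip p a * a'| + |q * phip q b * b'| := abs_add_le _ _
    _ = p * |a| ^ (p - 1) * |a'| + q * |b| ^ (q - 1) * |b'| := by
        simp only [abs_mul, abs_of_nonneg hp, abs_of_nonneg hq, abs_phip hpq.lt.ne',
          abs_phip hpq.symm.lt.ne']
    _ ≤ p * |a| ^ (p - 1) * (A * |b| ^ (q - 1)) + q * |b| ^ (q - 1) * (B * |a| ^ (p - 1)) := by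
        gcongr
    _ = (p * A + q * B) * (|a| ^ (p - 1) * |b| ^ (q - 1)) := by ring
    _ ≤ (p * A + q * B) * (|a| ^ p + |b| ^ q) := by
        gcongr
        exact rpow_sub_one_mul_rpow_sub_one_le hpq (abs_nonneg a) (abs_nonneg b)

lemma abs_rpow_add_abs_rpow_le_mul_exp {w v w' v' : ℝ → ℝ} {a b A B : ℝ}
    (hpq : p.HolderConjugate q) (hA : 0 ≤ A) (hB : 0 ≤ B)
    (hw : ∀ x ∈ Icc a b, HasDerivAt w (w' x) x)
    (hv : ∀ x ∈ Icc a b, HasDerivAt v (v' x) x)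
    (hwv : ∀ x ∈ Icc a b, |w' x| ≤ A * |v x| ^ (q - 1))
    (hvw : ∀ x ∈ Icc a b, |v' x| ≤ B * |w x| ^ (p - 1)) {x : ℝ} (hx : x ∈ Icc a b) :
    |w a| ^ p + |v a| ^ q ≤ (|w x| ^ p + |v x| ^ q) * exp ((p * A + q * B) * (x - a)) :=
  le_mul_exp_of_neg_mul_le_deriv
    (fun y hy => (hasDerivAt_abs_rpow_comp hpq.lt (hw y hy)).add
      (hasDerivAt_abs_rpow_comp hpq.symm.lt (hv y hy)))
    (fun y hy => neg_le_of_abs_le <|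
      abs_phip_mul_add_phip_mul_le hpq hA hB (hwv y hy) (hvw y hy)) hx

end Gronwall

/-- The flux `v(r) = r ^ (N - 1) φ_p(u'(r))`, which turns the radial `p`-Laplace equation into the
first-order system `|u'| = (|v| / r ^ (N - 1)) ^ (p' - 1)`, `v' = -r ^ (N - 1) g(u)`. -/
noncomputable def flux (p : ℝ) (N : ℕ) (u : ℝ → ℝ) (x : ℝ) : ℝ :=
  x ^ (N - 1) * phip p (deriv u x)

lemma abs_flux {x : ℝ} (hx : 0 ≤ x) (p : ℝ) (N : ℕ) (u : ℝ → ℝ) :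
    |flux p N u x| = x ^ (N - 1) * |phip p (deriv u x)| := by
  rw [flux, abs_mul, abs_of_nonneg (pow_nonneg hx _)]

lemma abs_deriv_le_mul_abs_flux_rpow {p q b x : ℝ} (hpq : p.HolderConjugate q) (hb : 0 < b)
    (hbx : b ≤ x) (N : ℕ) (u : ℝ → ℝ) :
    |deriv u x| ≤ ((b ^ (N - 1))⁻¹) ^ (q - 1) * |flux p N u x| ^ (q - 1) := by
  have hbN : 0 < b ^ (N - 1) := pow_pos hb _
  have hphip : |phip p (deriv u x)| ≤ (b ^ (N - 1))⁻¹ * |flux p N u x| := by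
    rw [le_inv_mul_iff₀ hbN, abs_flux (hb.le.trans hbx)]
    gcongr
  calc |deriv u x| = |phip p (deriv u x)| ^ (q - 1) := (abs_phip_rpow_conj_sub_one hpq _).symm
    _ ≤ ((b ^ (N - 1))⁻¹ * |flux p N u x|) ^ (q - 1) :=
        rpow_le_rpow (abs_nonneg _) hphip hpq.symm.sub_one_pos.le
    _ = ((b ^ (N - 1))⁻¹) ^ (q - 1) * |flux p N u x| ^ (q - 1) :=
        mul_rpow (inv_nonneg.2 hbN.le) (abs_nonneg _)

lemma abs_rpow_add_abs_flux_rpow_le {p q x R : ℝ} (hpq : p.HolderConjugate q) (hx : x ∈ Icc 0 R)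
    (N : ℕ) (u : ℝ → ℝ) :
    |u x| ^ p + |flux p N u x| ^ q ≤ (1 + (R ^ (N - 1)) ^ q) * (|u x| + |deriv u x|) ^ p := by
  have hp := hpq.nonneg
  have hq := hpq.symm.nonneg
  have hx0 := hx.1
  have hR : 0 ≤ R := hx0.trans hx.2
  rw [abs_flux hx0, mul_rpow (by positivity) (abs_nonneg _), abs_phip_rpow_conj hpq, add_mul,
    one_mul]
  gcongr
  · exact le_add_of_nonneg_right (abs_nonneg _)
  · exact hx.2
  · exact le_add_of_nonneg_left (abs_nonneg _)

section CauchySol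

variable {p q C R1 R2 b d : ℝ} {N : ℕ} {g u : ℝ → ℝ}

lemma nonneg_of_abs_le_mul_abs_rpow (hg : ∀ s, |g s| ≤ C * |s| ^ (p - 1)) : 0 ≤ C := by
  simpa using (abs_nonneg (g 1)).trans (hg 1)

lemma CauchySol.continuousOn (hu : CauchySol p N R1 R2 g u d) : ContinuousOn u (Icc R1 R2) :=
  fun x hx => (hu.1 x hx).continuousAt.continuousWithinAt

lemma CauchySol.abs_phip_deriv_le (hu : CauchySol p N R1 R2 g u d) (hR1 : 0 ≤ R1) {G y : ℝ}
    (hy : y ∈ Icc R1 R2) (hG : ∀ t ∈ Icc R1 y, |g (u t)| ≤ G) :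
    |phip p (deriv u y)| ≤ G * (y - R1) := by
  obtain ⟨-, -, -, hu'0, hvcont, hv⟩ := hu
  rcases hy.1.eq_or_lt with rfl | hR1y
  · simp [hu'0, phip]
  obtain ⟨t, ht, hslope⟩ := exists_hasDerivAt_eq_slope _ _ hR1y
    (hvcont.mono (Icc_subset_Icc_right hy.2)) fun t ht => hv t ⟨ht.1, ht.2.le.trans hy.2⟩
  have hy0 : 0 < y := hR1.trans_lt hR1y
  have ht0 : 0 ≤ t := hR1.trans ht.1.le
  have hyR1 : 0 < y - R1 := sub_pos.2 hR1y
  have hflux : -(t ^ (N - 1)) * g (u t) * (y - R1) = y ^ (N - 1) * phip p (deriv u y) := by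
    rw [eq_div_iff hyR1.ne', hu'0] at hslope
    simpa [phip] using hslope
  refine le_of_mul_le_mul_left ?_ (pow_pos hy0 (N - 1))
  calc y ^ (N - 1) * |phip p (deriv u y)| = |y ^ (N - 1) * phip p (deriv u y)| := by
        rw [abs_mul, abs_of_pos (pow_pos hy0 _)]
    _ = t ^ (N - 1) * |g (u t)| * (y - R1) := by
        rw [← hflux, abs_mul, abs_mul, abs_neg, abs_of_nonneg (pow_nonneg ht0 _), abs_of_pos hyR1]
    _ ≤ y ^ (N - 1) * G * (y - R1) := by
        gcongr
        · exact ht.2.le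
        · exact hG t ⟨ht.1.le, ht.2.le⟩
    _ = y ^ (N - 1) * (G * (y - R1)) := mul_assoc _ _ _

lemma CauchySol.abs_deriv_le (hp : 1 < p) (hR1 : 0 ≤ R1) (hg : ∀ s, |g s| ≤ C * |s| ^ (p - 1))
    (hu : CauchySol p N R1 R2 g u d) {m y : ℝ} (hy : y ∈ Icc R1 R2)
    (hm : ∀ t ∈ Icc R1 y, |u t| ≤ m) : |deriv u y| ≤ (C * (y - R1)) ^ (p - 1)⁻¹ * m := by
  have hp1 : 0 < p - 1 := sub_pos.2 hp
  have hC : 0 ≤ C := nonneg_of_abs_le_mul_abs_rpow hg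
  have hm0 : 0 ≤ m := (abs_nonneg _).trans (hm y ⟨hy.1, le_rfl⟩)
  have hCy : 0 ≤ C * (y - R1) := mul_nonneg hC (sub_nonneg.2 hy.1)
  have hG : ∀ t ∈ Icc R1 y, |g (u t)| ≤ C * m ^ (p - 1) := fun t ht => by
    grw [hg, hm t ht]
  refine (rpow_le_rpow_iff (abs_nonneg _) (by positivity) hp1).1 ?_
  calc |deriv u y| ^ (p - 1) = |phip p (deriv u y)| := (abs_phip hp.ne' _).symm
    _ ≤ C * m ^ (p - 1) * (y - R1) := hu.abs_phip_deriv_le hR1 hy hG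
    _ = C * (y - R1) * m ^ (p - 1) := by ring
    _ = ((C * (y - R1)) ^ (p - 1)⁻¹ * m) ^ (p - 1) := by
        rw [mul_rpow (by positivity) hm0, rpow_inv_rpow hCy hp1.ne']

lemma CauchySol.abs_le_two_mul_abs (hp : 1 < p) (hR1 : 0 ≤ R1)
    (hg : ∀ s, |g s| ≤ C * |s| ^ (p - 1)) (hu : CauchySol p N R1 R2 g u d) (hbR2 : b ≤ R2)
    (hb : (C * (b - R1)) ^ (p - 1)⁻¹ * (b - R1) ≤ 1 / 3) {x : ℝ} (hx : x ∈ Icc R1 b) :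
    |d| ≤ 2 * |u x| := by
  have hp1 : 0 < p - 1 := sub_pos.2 hp
  have hC : 0 ≤ C := nonneg_of_abs_le_mul_abs_rpow hg
  have hsub : Icc R1 b ⊆ Icc R1 R2 := Icc_subset_Icc_right hbR2
  obtain ⟨z, hz, hmax⟩ := isCompact_Icc.exists_isMaxOn ⟨x, hx⟩ (hu.continuousOn.mono hsub).abs
  have hderiv : ∀ y ∈ Icc R1 b, ‖deriv u y‖ ≤ (C * (b - R1)) ^ (p - 1)⁻¹ * |u z| := fun y hy => by
    have hyR1 : 0 ≤ y - R1 := sub_nonneg.2 hy.1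
    grw [norm_eq_abs, hu.abs_deriv_le hp hR1 hg (hsub hy)
      fun t ht => hmax (Icc_subset_Icc_right hy.2 ht), hy.2]
  have hvar : ∀ y ∈ Icc R1 b, |u y - d| ≤ 1 / 3 * |u z| := fun y hy => by
    have hyR1 : 0 ≤ y - R1 := sub_nonneg.2 hy.1
    have hbR1 : 0 ≤ b - R1 := hyR1.trans (sub_le_sub_right hy.2 R1)
    calc |u y - d| ≤ (C * (b - R1)) ^ (p - 1)⁻¹ * |u z| * |y - R1| := by
          rw [← hu.2.2.1]
          exact (convex_Icc R1 b).norm_image_sub_le_of_norm_deriv_le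
            (fun t ht => hu.1 t (hsub ht)) hderiv ⟨le_rfl, hy.1.trans hy.2⟩ hy
      _ ≤ (C * (b - R1)) ^ (p - 1)⁻¹ * |u z| * (b - R1) := by
          rw [abs_of_nonneg hyR1]
          gcongr
          exact hy.2
      _ = (C * (b - R1)) ^ (p - 1)⁻¹ * (b - R1) * |u z| := by ring
      _ ≤ 1 / 3 * |u z| := by gcongr
  have hmax_le : |u z| ≤ 3 / 2 * |d| := by
    linarith [hvar z hz, abs_sub_abs_le_abs_sub (u z) d]
  linarith [hvar x hx, abs_sub_abs_le_abs_sub d (u x), abs_sub_comm d (u x)]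

lemma exists_mem_Ioo_mul_rpow_mul_le {ε r : ℝ} (hε : 0 < ε) (hr : 0 ≤ r) (C : ℝ) (h : R1 < R2) :
    ∃ b ∈ Ioo R1 R2, (C * (b - R1)) ^ r * (b - R1) ≤ ε := by
  have hcont : Continuous fun b => (C * (b - R1)) ^ r * (b - R1) :=
    ((continuous_const.mul (continuous_sub_right R1)).rpow_const fun _ => .inr hr).mul
      (continuous_sub_right R1)
  have hsmall : ∀ᶠ b in 𝓝[>] R1, (C * (b - R1)) ^ r * (b - R1) < ε :=
    nhdsWithin_le_nhds <| hcont.continuousAt.eventually_lt continuousAt_const (by simpa using hε)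
  obtain ⟨b, hbε, hb⟩ := (hsmall.and (Ioo_mem_nhdsGT h)).exists
  exact ⟨b, hb, hbε.le⟩

lemma CauchySol.abs_rpow_add_abs_flux_rpow_le_mul_exp (hpq : p.HolderConjugate q)
    (hg : ∀ s, |g s| ≤ C * |s| ^ (p - 1)) (hu : CauchySol p N R1 R2 g u d) (hb0 : 0 < b)
    (hb : R1 < b) {x : ℝ} (hx : x ∈ Icc b R2) :
    |u b| ^ p + |flux p N u b| ^ q ≤ (|u x| ^ p + |flux p N u x| ^ q) *
      exp ((p * ((b ^ (N - 1))⁻¹) ^ (q - 1) + q * (R2 ^ (N - 1) * C)) * (x - b)) := by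
  have hC : 0 ≤ C := nonneg_of_abs_le_mul_abs_rpow hg
  have hR2 : 0 ≤ R2 := hb0.le.trans (hx.1.trans hx.2)
  refine abs_rpow_add_abs_rpow_le_mul_exp hpq (by positivity) (by positivity)
    (fun y hy => (hu.1 y ⟨hb.le.trans hy.1, hy.2⟩).hasDerivAt)
    (fun y hy => hu.2.2.2.2.2 y ⟨hb.trans_le hy.1, hy.2⟩)
    (fun y hy => abs_deriv_le_mul_abs_flux_rpow hpq hb0 hy.1 N u) (fun y hy => ?_) hx
  have hy0 : 0 ≤ y := hb0.le.trans hy.1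
  rw [abs_mul, abs_neg, abs_of_nonneg (pow_nonneg hy0 _), mul_assoc]
  gcongr
  · exact hy.2
  · exact hg _

lemma exists_abs_le_mul_abs_add_abs_deriv_of_le (hp : 1 < p) (N : ℕ) (hb0 : 0 < b) (hR1b : R1 < b)
    (hbR2 : b ≤ R2) (hg : ∀ s, |g s| ≤ C * |s| ^ (p - 1)) :
    ∃ c, 1 ≤ c ∧ ∀ d u, CauchySol p N R1 R2 g u d → ∀ x ∈ Icc b R2,
      |u b| ≤ c * (|u x| + |deriv u x|) := by
  have hpq := HolderConjugate.conjExponent hp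
  set q := conjExponent p
  have hp0 := hpq.pos
  have hq0 := hpq.symm.pos
  have hC : 0 ≤ C := nonneg_of_abs_le_mul_abs_rpow hg
  have hR2 : 0 ≤ R2 := hb0.le.trans hbR2
  set S := (R2 ^ (N - 1)) ^ q
  set K := p * ((b ^ (N - 1))⁻¹) ^ (q - 1) + q * (R2 ^ (N - 1) * C)
  have hS : 0 ≤ S := by positivity
  have hK : 0 ≤ K := by positivity
  have hQ : 1 ≤ (1 + S) * exp (K * (R2 - b)) :=
    one_le_mul_of_one_le_of_one_le (by linarith)
      (one_le_exp (mul_nonneg hK (sub_nonneg.2 hbR2)))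
  refine ⟨((1 + S) * exp (K * (R2 - b))) ^ p⁻¹, one_le_rpow hQ (by positivity),
    fun d u hu x hx => ?_⟩
  refine (rpow_le_rpow_iff (abs_nonneg _) (by positivity) hp0).1 ?_
  calc |u b| ^ p ≤ |u b| ^ p + |flux p N u b| ^ q := le_add_of_nonneg_right (by positivity)
    _ ≤ (|u x| ^ p + |flux p N u x| ^ q) * exp (K * (x - b)) :=
        hu.abs_rpow_add_abs_flux_rpow_le_mul_exp hpq hg hb0 hR1b hx
    _ ≤ (1 + S) * (|u x| + |deriv u x|) ^ p * exp (K * (R2 - b)) := by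
        gcongr
        · exact abs_rpow_add_abs_flux_rpow_le hpq ⟨hb0.le.trans hx.1, hx.2⟩ N u
        · exact hx.2
    _ = (((1 + S) * exp (K * (R2 - b))) ^ p⁻¹ * (|u x| + |deriv u x|)) ^ p := by
        rw [mul_rpow (by positivity) (by positivity), rpow_inv_rpow (by positivity) hp0.ne']
        ring

end CauchySol

lemma rOne_le {R1 R2 : ℝ} (h : R1 ≤ R2) (u : ℝ → ℝ) : rOne R1 R2 u ≤ R2 :=
  csSup_le ⟨R1, ⟨le_rfl, h⟩, by simp⟩ fun _ hx => hx.1.2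

lemma nonneg_of_mem_Icc_rOne {R1 R2 : ℝ} {u : ℝ → ℝ} (h : R1 ≤ R2)
    (hu : ContinuousOn u (Icc R1 R2)) (hu1 : 0 ≤ u R1) {x : ℝ} (hx : x ∈ Icc R1 (rOne R1 R2 u)) :
    0 ≤ u x := by
  have hne : {y | y ∈ Icc R1 R2 ∧ ∀ s ∈ Ico R1 y, 0 < u s}.Nonempty := ⟨R1, ⟨le_rfl, h⟩, by simp⟩
  have hpos : ∀ s ∈ Ico R1 (rOne R1 R2 u), 0 ≤ u s := fun s hs => by
    obtain ⟨y, hy, hsy⟩ := exists_lt_of_lt_csSup hne hs.2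
    exact (hy.2 s ⟨hs.1, hsy⟩).le
  rcases eq_or_ne R1 (rOne R1 R2 u) with heq | hlt
  · rwa [← le_antisymm hx.1 (hx.2.trans heq.ge)]
  · rw [← closure_Ico hlt] at hx
    refine le_on_closure hpos continuousOn_const (hu.mono ?_) hx
    rw [closure_Ico hlt]
    exact Icc_subset_Icc_right (rOne_le h u)

theorem stmt15_general {p C R1 R2 : ℝ} (hp : 1 < p) (N : ℕ) (hR1 : 0 ≤ R1) (hR : R1 < R2)
    {g : ℝ → ℝ} (hg : ∀ s, |g s| ≤ C * |s| ^ (p - 1)) :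
    ∃ c, 0 < c ∧ ∀ d u, CauchySol p N R1 R2 g u d → ∀ x ∈ Icc R1 R2,
      |d| ≤ c * (|u x| + |deriv u x|) := by
  obtain ⟨b, hb, hb_small⟩ := exists_mem_Ioo_mul_rpow_mul_le (ε := 1 / 3) (by norm_num)
    (inv_nonneg.2 (sub_pos.2 hp).le) C hR
  obtain ⟨c, hc, hfar⟩ := exists_abs_le_mul_abs_add_abs_deriv_of_le hp N (hR1.trans_lt hb.1) hb.1
    hb.2.le hg
  refine ⟨2 * c, by positivity, fun d u hu x hx => ?_⟩
  have hnear : ∀ y ∈ Icc R1 b, |d| ≤ 2 * |u y| := fun y hy =>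
    hu.abs_le_two_mul_abs hp hR1 hg hb.2.le hb_small hy
  rcases le_total x b with hxb | hbx
  · calc |d| ≤ 2 * |u x| := hnear x ⟨hx.1, hxb⟩
      _ ≤ 2 * (|u x| + |deriv u x|) := by linarith [abs_nonneg (deriv u x)]
      _ ≤ 2 * c * (|u x| + |deriv u x|) := by
          gcongr
          linarith
  · calc |d| ≤ 2 * |u b| := hnear b ⟨hb.1.le, le_rfl⟩
      _ ≤ 2 * (c * (|u x| + |deriv u x|)) := by grw [hfar d u hu x ⟨hbx, hx.2⟩]
      _ = 2 * c * (|u x| + |deriv u x|) := (mul_assoc _ _ _).symm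

theorem stmt15 (p : ℝ) (hp : 1 < p) (N : ℕ) (hN : 1 ≤ N)
    (R2 : ℝ) (hR2 : 0 < R2)
    (f : ℝ → ℝ) (hreg : Freg f) (heq : Feq f) (h0 : Fzero p f) (hsubl : Fsubl p f) :
    ∀ M : ℝ, 0 < M → ∃ D : ℝ, 0 < D ∧ ∀ d : ℝ, D ≤ d →
      ∀ u : ℝ → ℝ, CauchySol p N 0 R2 (fhat f) u d →
        ∀ x ∈ Icc 0 (rOne 0 R2 u), M ≤ u x + |deriv u x| := by
  intro M hM
  obtain ⟨C, hC⟩ := exists_abs_fhat_le_mul_rpow (hreg.1.mono Ioi_subset_Ici_self) heq h0 hsubl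
  obtain ⟨c, hc, hbound⟩ := stmt15_general hp N le_rfl hR2 hC
  refine ⟨c * M, by positivity, fun d hd u hu x hx => le_of_mul_le_mul_left ?_ hc⟩
  have hd0 : 0 ≤ d := (mul_pos hc hM).le.trans hd
  have hux : 0 ≤ u x := nonneg_of_mem_Icc_rOne hR2.le hu.continuousOn (hu.2.2.1 ▸ hd0) hx
  have hxR2 : x ≤ R2 := hx.2.trans (rOne_le hR2.le u)
  calc c * M ≤ |d| := hd.trans (le_abs_self d)
    _ ≤ c * (|u x| + |deriv u x|) := hbound d u hu x ⟨hx.1, hxR2⟩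
    _ = c * (u x + |deriv u x|) := by rw [abs_of_nonneg hux]
end
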